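/- arXiv:1902.02894 — 4 statements merged into one kernel-verified Lean document; each statement's English description precedes it below -/
import Mathlib

section
/- Let G be a finite group, k a field of characteristic p > 0, and let M and N be finite-dimensional kG-modules such that M ⊗ N ≅ k ⊕ P for some projective kG-module P. Then there exist projective kG-modules P₁ and P₂ such that N ⊕ P₁ ≅ M* ⊕ P₂, where M* = Hom_k(M, k) is the dual module with contragredient G-action (g·f)(m) = f(g⁻¹m). -/
/-!
Call a `k`-linear map `f` between two representations of the finite group `G` a *relative trace*
if `f = ∑ g, g h g⁻¹` for some `k`-linear map `h`. Relative traces form a two-sided ideal in the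
category of representations, and by Higman's criterion (`projective_iff_isRelTrace_id`) an object
is projective exactly when its identity is a relative trace. So "congruent modulo relative
traces" means "equal in the stable module category", while everything stays elementary linear
algebra.

Write `i : k ⟶ M ⊗ N` and `π : M ⊗ N ⟶ k` for the inclusion and projection coming from
`M ⊗ N ≅ k ⊕ P`; then `π i = 1` and `i π ≡ 1`, because `P` is projective. Put `a = i 1` and define
`φ : N ⟶ M*` by `φ n = π (- ⊗ n)` and `ψ : M* ⟶ N` by contracting the first factor of `a`. The
composite `ψ φ` is the *zigzag*
`N ⟶ M ⊗ N ⊗ N ⟶ M ⊗ N ⊗ N ⟶ N` given by `i ⊗ 1`, then the swap `τ` of the two copies of `N`, then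
`π ⊗ 1`. As `i ⊗ 1` and `π ⊗ 1` are mutually inverse modulo relative traces, the zigzag is conjugate
to `τ`, so its square is `≡ 1` (`isRelTrace_one_sub_zigzag_sq`). The other composite `φ ψ` is the
transpose of the corresponding zigzag on `M`, and transposes of relative traces are relative
traces, so its square is `≡ 1` too. Hence `φ` and `ψ φ ψ` are mutually inverse modulo relative
traces.

Finally (`exists_biprod_iso`), such a pair gives an actual isomorphism after adding projectives:
if `1 - (ψ φ ψ) φ` factors as `v u` through a projective `Q`, then `(φ, u) : N ⟶ M* ⊕ Q` is split
mono, and the identity of its complement is a relative trace.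
-/

/-! ### Relative traces and the zigzag -/

section RelTrace

open TensorProduct

variable {k G U V W X : Type*} [Field k] [Group G] [Fintype G]
  [AddCommGroup U] [Module k U] [AddCommGroup V] [Module k V]
  [AddCommGroup W] [Module k W] [AddCommGroup X] [Module k X]

/-- `f` is a relative trace from the trivial subgroup: `f = ∑ g, g h g⁻¹` for a `k`-linear map
`h`, which need not be equivariant. -/
def IsRelTrace (ρ : Representation k G V) (σ : Representation k G W) (f : V →ₗ[k] W) : Prop :=
  ∃ h : V →ₗ[k] W, f = ∑ g, σ g ∘ₗ h ∘ₗ ρ g⁻¹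

variable {ρ : Representation k G V} {σ : Representation k G W} {τ : Representation k G X}

lemma IsRelTrace.add {f f' : V →ₗ[k] W} (hf : IsRelTrace ρ σ f) (hf' : IsRelTrace ρ σ f') :
    IsRelTrace ρ σ (f + f') := by
  obtain ⟨h, rfl⟩ := hf
  obtain ⟨h', rfl⟩ := hf'
  refine ⟨h + h', ?_⟩
  simp [LinearMap.add_comp, LinearMap.comp_add, Finset.sum_add_distrib]

lemma IsRelTrace.neg {f : V →ₗ[k] W} (hf : IsRelTrace ρ σ f) : IsRelTrace ρ σ (-f) := by
  obtain ⟨h, rfl⟩ := hf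
  refine ⟨-h, ?_⟩
  simp [LinearMap.neg_comp, LinearMap.comp_neg, Finset.sum_neg_distrib]

lemma IsRelTrace.comp_left {f : V →ₗ[k] W} (hf : IsRelTrace ρ σ f) (e : W →ₗ[k] X)
    (he : ∀ g w, e (σ g w) = τ g (e w)) : IsRelTrace ρ τ (e ∘ₗ f) := by
  obtain ⟨h, rfl⟩ := hf
  refine ⟨e ∘ₗ h, ?_⟩
  ext v
  simp [he]

lemma IsRelTrace.comp_right {f : W →ₗ[k] X} (hf : IsRelTrace σ τ f) (e : V →ₗ[k] W)
    (he : ∀ g v, e (ρ g v) = σ g (e v)) : IsRelTrace ρ τ (f ∘ₗ e) := by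
  obtain ⟨h, rfl⟩ := hf
  refine ⟨h ∘ₗ e, ?_⟩
  ext v
  simp [he]

lemma IsRelTrace.rTensor {f : V →ₗ[k] W} (hf : IsRelTrace ρ σ f) (υ : Representation k G X) :
    IsRelTrace (ρ.tprod υ) (σ.tprod υ) (f.rTensor X) := by
  obtain ⟨h, rfl⟩ := hf
  refine ⟨h.rTensor X, ?_⟩
  ext v x
  simp [TensorProduct.sum_tmul]

lemma IsRelTrace.dualMap {f : V →ₗ[k] W} (hf : IsRelTrace ρ σ f) :
    IsRelTrace σ.dual ρ.dual f.dualMap := by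
  obtain ⟨h, rfl⟩ := hf
  refine ⟨h.dualMap, ?_⟩
  ext l v
  simp only [LinearMap.dualMap_apply, LinearMap.sum_apply, LinearMap.comp_apply, map_sum,
    Representation.dual_apply, Module.Dual.transpose_apply, inv_inv]

/-- The zigzag `v ↦ ∑ π (aₜ ⊗ v) • bₜ` attached to a form `π` on `U ⊗ V` and a tensor
`a = ∑ aₜ ⊗ bₜ`. -/
noncomputable def zigzag (π : U ⊗[k] V →ₗ[k] k) (a : U ⊗[k] V) : V →ₗ[k] V :=
  TensorProduct.lid k V ∘ₗ π.rTensor V ∘ₗ (TensorProduct.rightComm k U V V).toLinearMap ∘ₗ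
    TensorProduct.mk k (U ⊗[k] V) V a

/-- If `π a = 1` and `a π` is the identity of `U ⊗ V` modulo relative traces, then the zigzag is
an involution modulo relative traces, being conjugate to the swap of two copies of `V`. -/
lemma isRelTrace_one_sub_zigzag_sq (ρU : Representation k G U) (ρ : Representation k G V)
    (π : U ⊗[k] V →ₗ[k] k) (hπ : ∀ g x, π (ρU.tprod ρ g x) = π x)
    (a : U ⊗[k] V) (ha : ∀ g, ρU.tprod ρ g a = a) (hπa : π a = 1)
    (h : IsRelTrace (ρU.tprod ρ) (ρU.tprod ρ)
      (LinearMap.id - LinearMap.toSpanSingleton k _ a ∘ₗ π)) :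
    IsRelTrace ρ ρ (LinearMap.id - zigzag π a ∘ₗ zigzag π a) := by
  let A : (U ⊗[k] V) ⊗[k] V →ₗ[k] V := TensorProduct.lid k V ∘ₗ π.rTensor V
  let J : V →ₗ[k] (U ⊗[k] V) ⊗[k] V := TensorProduct.mk k (U ⊗[k] V) V a
  let s : (U ⊗[k] V) ⊗[k] V →ₗ[k] (U ⊗[k] V) ⊗[k] V :=
    (TensorProduct.rightComm k U V V).toLinearMap
  let R : (U ⊗[k] V) →ₗ[k] (U ⊗[k] V) := LinearMap.id - LinearMap.toSpanSingleton k _ a ∘ₗ π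
  have hAJ : A ∘ₗ J = LinearMap.id := by
    ext v
    simp [A, J, hπa]
  have hJA : J ∘ₗ A = LinearMap.id - R.rTensor V := by
    refine TensorProduct.ext' fun x v => ?_
    simp [A, J, R, TensorProduct.smul_tmul]
  have hss : s ∘ₗ s = LinearMap.id := by
    ext u v w
    simp [s]
  have hA : ∀ g x, A (((ρU.tprod ρ).tprod ρ) g x) = ρ g (A x) := by
    intro g x
    induction x with
    | zero => simp
    | add x y hx hy => simp only [map_add, hx, hy]
    | tmul x v => simpa [A] using congrArg (· • ρ g v) (hπ g x)
  have hJ : ∀ g v, J (ρ g v) = ((ρU.tprod ρ).tprod ρ) g (J v) := by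
    intro g v
    simpa [J] using congrArg (· ⊗ₜ[k] ρ g v) (ha g).symm
  have hs : ∀ g x, s (((ρU.tprod ρ).tprod ρ) g x) = ((ρU.tprod ρ).tprod ρ) g (s x) := by
    intro g x
    have : s ∘ₗ ((ρU.tprod ρ).tprod ρ) g = ((ρU.tprod ρ).tprod ρ) g ∘ₗ s := by
      ext u v w
      simp [s]
    exact LinearMap.congr_fun this x
  have key : LinearMap.id - zigzag π a ∘ₗ zigzag π a = (A ∘ₗ s) ∘ₗ R.rTensor V ∘ₗ (s ∘ₗ J) := by
    have hz : zigzag π a = A ∘ₗ s ∘ₗ J := rfl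
    ext v
    have h1 := LinearMap.congr_fun hJA (s (J v))
    have h2 := LinearMap.congr_fun hss (J v)
    have h3 := LinearMap.congr_fun hAJ v
    simp only [LinearMap.comp_apply, LinearMap.sub_apply, LinearMap.id_apply] at h1 h2 h3
    simp only [hz, LinearMap.comp_apply, LinearMap.sub_apply, LinearMap.id_apply, h1, map_sub, h2,
      h3]
    abel
  rw [key]
  exact ((h.rTensor ρ).comp_right (s ∘ₗ J) (fun g v => by
    simp only [LinearMap.comp_apply, hJ, hs])).comp_left (A ∘ₗ s) (fun g v => by
    simp only [LinearMap.comp_apply, hA, hs])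

end RelTrace

open CategoryTheory CategoryTheory.Limits MonoidalCategory

/-! ### Projective representations and stable isomorphisms -/

section Higman

variable {k G : Type} [Field k] [Group G]

/-- The representation of `G` on functions `G → B` by `(g • F) x = g (F (g⁻¹ x))`; it is the
(co)induction to `G` of the vector space underlying `B`. -/
def funRepresentation {W : Type} [AddCommGroup W] [Module k W] (σ : Representation k G W) :
    Representation k G (G → W) where
  toFun := fun g =>
    { toFun := fun F x => σ g (F (g⁻¹ * x))
      map_add' := fun F F' => by ext x; simp
      map_smul' := fun c F => by ext x; simp }
  map_one' := by ext; simp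
  map_mul' := fun g g' => by ext; simp [mul_assoc]

@[simp]
lemma funRepresentation_apply {W : Type} [AddCommGroup W] [Module k W]
    (σ : Representation k G W) (g : G) (F : G → W) (x : G) :
    funRepresentation σ g F x = σ g (F (g⁻¹ * x)) := rfl

/-- `funRepresentation` as an object of `Rep k G`. -/
abbrev funRep (B : Rep.{0} k G) : Rep.{0} k G := Rep.of (funRepresentation B.ρ)

variable [Fintype G]

/-- Summation of values, a surjection `funRep B ⟶ B`. -/
def funRepSum (B : Rep.{0} k G) : funRep B ⟶ B :=
  Rep.ofHom (ρ := funRepresentation B.ρ) (σ := B.ρ)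
    { toLinearMap := ∑ x, LinearMap.proj x
      isIntertwining' := fun g => by
        refine LinearMap.ext fun F => ?_
        simp only [LinearMap.comp_apply, LinearMap.sum_apply, LinearMap.proj_apply,
          funRepresentation_apply, map_sum]
        exact Equiv.sum_comp (Equiv.mulLeft g⁻¹) fun x => B.ρ g (F x) }

lemma funRepSum_apply (B : Rep.{0} k G) (F : G → B.V) :
    (funRepSum B).hom F = ∑ x, F x :=
  LinearMap.sum_apply _ _ _

/-- Relative traces among morphisms of `Rep k G`. -/
def IsRelTraceHom {A B : Rep.{0} k G} (f : A ⟶ B) : Prop :=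
  IsRelTrace A.ρ B.ρ f.hom.toLinearMap

lemma IsRelTraceHom.comp_left {A B C : Rep.{0} k G} {f : A ⟶ B} (hf : IsRelTraceHom f)
    (e : B ⟶ C) : IsRelTraceHom (f ≫ e) :=
  IsRelTrace.comp_left hf e.hom.toLinearMap fun g w => Rep.hom_comm_apply e g w

lemma IsRelTraceHom.comp_right {A B C : Rep.{0} k G} {f : B ⟶ C} (hf : IsRelTraceHom f)
    (e : A ⟶ B) : IsRelTraceHom (e ≫ f) :=
  IsRelTrace.comp_right hf e.hom.toLinearMap fun g w => Rep.hom_comm_apply e g w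

lemma IsRelTraceHom.add {A B : Rep.{0} k G} {f f' : A ⟶ B} (hf : IsRelTraceHom f)
    (hf' : IsRelTraceHom f') : IsRelTraceHom (f + f') :=
  IsRelTrace.add hf hf'

lemma IsRelTraceHom.neg {A B : Rep.{0} k G} {f : A ⟶ B} (hf : IsRelTraceHom f) :
    IsRelTraceHom (-f) :=
  IsRelTrace.neg hf

lemma isRelTraceHom_id_funRep (B : Rep.{0} k G) : IsRelTraceHom (𝟙 (funRep B)) := by
  classical
  -- The identity is the sum of the `G`-conjugates of the projection onto functions supported at `1`.
  refine ⟨LinearMap.single k (fun _ : G => B.V) 1 ∘ₗ LinearMap.proj 1, ?_⟩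
  refine LinearMap.ext fun F => funext fun x => ?_
  have h : ∀ g : G, (funRepresentation B.ρ g ∘ₗ (LinearMap.single k (fun _ : G => B.V) 1 ∘ₗ
      LinearMap.proj 1) ∘ₗ funRepresentation B.ρ g⁻¹) F x = if g = x then F x else 0 := by
    intro g
    by_cases hg : g = x
    · subst hg; simp
    · have : g⁻¹ * x ≠ 1 := fun h => hg (inv_mul_eq_one.1 h)
      simp [hg, this]
  rw [LinearMap.sum_apply, Finset.sum_apply, Finset.sum_congr rfl fun g _ => h g,
    Finset.sum_ite_eq' Finset.univ x fun _ => F x, if_pos (Finset.mem_univ x)]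
  rfl

/-- **Higman's criterion** for projectivity relative to the trivial subgroup. -/
lemma projective_iff_isRelTrace_id (A : Rep.{0} k G) : Projective A ↔ IsRelTraceHom (𝟙 A) := by
  classical
  constructor
  · intro hA
    have : Epi (funRepSum A) := by
      rw [Rep.epi_iff_surjective]
      intro b
      exact ⟨(Pi.single 1 b : G → A.V), (funRepSum_apply A _).trans (by simp)⟩
    have h := ((isRelTraceHom_id_funRep A).comp_left (funRepSum A)).comp_right
      (Projective.factorThru (𝟙 A) (funRepSum A))
    rwa [Category.id_comp, Projective.factorThru_comp] at h
  · rintro ⟨h, hh⟩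
    refine ⟨fun {E X} f e he => ?_⟩
    -- Average a linear lift of `f` along a linear section of `e`.
    obtain ⟨s, hs⟩ := e.hom.toLinearMap.exists_rightInverse_of_surjective
      (LinearMap.range_eq_top.2 ((Rep.epi_iff_surjective e).1 he))
    have hs' : ∀ x, e.hom (s x) = x := fun x => LinearMap.congr_fun hs x
    let l : A.V →ₗ[k] E.V := ∑ g, E.ρ g ∘ₗ (s ∘ₗ f.hom.toLinearMap ∘ₗ h) ∘ₗ A.ρ g⁻¹
    have hl : ∀ g, l ∘ₗ A.ρ g = E.ρ g ∘ₗ l := by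
      intro g
      ext v
      have := Equiv.sum_comp (Equiv.mulLeft g) fun x => E.ρ x (s (f.hom (h (A.ρ x⁻¹ (A.ρ g v)))))
      simpa [l, LinearMap.sum_apply, map_sum] using this.symm
    refine ⟨Rep.ofHom (ρ := A.ρ) (σ := E.ρ) ⟨l, hl⟩, ?_⟩
    ext v
    have h1 : v = ∑ g, A.ρ g (h (A.ρ g⁻¹ v)) := by
      simpa [LinearMap.sum_apply] using LinearMap.congr_fun hh v
    have h2 : e.hom (l v) = ∑ g, f.hom (A.ρ g (h (A.ρ g⁻¹ v))) := by
      simp [l, LinearMap.sum_apply, map_sum, Rep.hom_comm_apply, hs']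
    refine h2.trans ?_
    rw [← map_sum, ← h1]
    rfl

lemma IsRelTraceHom.of_projective {A B Q : Rep.{0} k G} (hQ : Projective Q) (u : A ⟶ Q)
    (v : Q ⟶ B) : IsRelTraceHom (u ≫ v) := by
  have := (((projective_iff_isRelTrace_id Q).1 hQ).comp_left v).comp_right u
  rwa [Category.id_comp] at this

/-- A relative trace `∑ g, g h g⁻¹` factors through functions on `G` as
`v ↦ (g ↦ g h g⁻¹ v)` followed by summation. -/
lemma IsRelTraceHom.exists_factor {A B : Rep.{0} k G} {f : A ⟶ B} (hf : IsRelTraceHom f) :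
    ∃ (Q : Rep.{0} k G) (u : A ⟶ Q) (v : Q ⟶ B), Projective Q ∧ u ≫ v = f := by
  obtain ⟨h, hh⟩ := hf
  refine ⟨funRep B, Rep.ofHom (ρ := A.ρ) (σ := funRepresentation B.ρ)
    { toLinearMap := LinearMap.pi fun g => B.ρ g ∘ₗ h ∘ₗ A.ρ g⁻¹
      isIntertwining' := fun g => by
        ext v x
        simp },
    funRepSum B, (projective_iff_isRelTrace_id _).2 (isRelTraceHom_id_funRep B), ?_⟩
  ext v
  refine (funRepSum_apply B _).trans ?_
  refine Eq.trans ?_ (LinearMap.congr_fun hh v).symm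
  rw [LinearMap.sum_apply]
  rfl

/-- Morphisms that are mutually inverse in the stable category become an isomorphism after adding
projective summands. -/
lemma exists_biprod_iso {A B : Rep.{0} k G} (φ : A ⟶ B) (ψ : B ⟶ A)
    (h₁ : IsRelTraceHom (𝟙 A - φ ≫ ψ)) (h₂ : IsRelTraceHom (𝟙 B - ψ ≫ φ)) :
    ∃ P₁ P₂ : Rep.{0} k G, Projective P₁ ∧ Projective P₂ ∧ Nonempty (A ⊞ P₁ ≅ B ⊞ P₂) := by
  obtain ⟨Q, u, v, hQ, huv⟩ := h₁.exists_factor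
  let s : A ⟶ B ⊞ Q := biprod.lift φ u
  let r : B ⊞ Q ⟶ A := biprod.desc ψ v
  have hsr : s ≫ r = 𝟙 A := by simp [s, r, huv]
  let q : B ⊞ Q ⟶ kernel r := kernel.lift r (𝟙 _ - r ≫ s) (by simp [hsr])
  have hq : q ≫ kernel.ι r = 𝟙 _ - r ≫ s := kernel.lift_ι _ _ _
  have hιq : kernel.ι r ≫ q = 𝟙 _ := by
    rw [← cancel_mono (kernel.ι r), Category.assoc, hq]
    simp
  have hsq : s ≫ q = 0 := by
    rw [← cancel_mono (kernel.ι r), Category.assoc, hq]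
    rw [Preadditive.comp_sub, ← Category.assoc, hsr]
    simp
  refine ⟨kernel r, Q, ?_, hQ, ⟨⟨biprod.desc s (kernel.ι r), biprod.lift r q, ?_, ?_⟩⟩⟩
  · rw [projective_iff_isRelTrace_id]
    have h : 𝟙 (B ⊞ Q) - r ≫ s =
        biprod.fst ≫ (𝟙 B - ψ ≫ φ) ≫ biprod.inl +
          (biprod.snd ≫ (biprod.inr - v ≫ s) + -((biprod.fst ≫ ψ ≫ u) ≫ biprod.inr)) := by
      apply biprod.hom_ext' <;> apply biprod.hom_ext <;> simp [s, r]
    have ht : IsRelTraceHom (𝟙 (B ⊞ Q) - r ≫ s) := by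
      rw [h]
      exact ((h₂.comp_left _).comp_right _).add
        ((IsRelTraceHom.of_projective hQ _ _).add (IsRelTraceHom.of_projective hQ _ _).neg)
    rw [← hq] at ht
    have := (ht.comp_left q).comp_right (kernel.ι r)
    rwa [Category.assoc, hιq, Category.comp_id, hιq] at this
  · apply biprod.hom_ext' <;> apply biprod.hom_ext <;> simp [hsr, hιq, hsq]
  · rw [biprod.lift_desc, hq]
    simp

end Higman

/-! ### The two comparison maps between a tensor factor and the dual of the other -/

section Duality

open TensorProduct

variable {k G U V : Type*} [Field k] [Group G]
  [AddCommGroup U] [Module k U] [AddCommGroup V] [Module k V]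

/-- Contraction of the first factor of `a ∈ U ⊗ V` against a linear form on `U`. -/
noncomputable def contractFst (a : U ⊗[k] V) : Module.Dual k U →ₗ[k] V :=
  (TensorProduct.lid k V).toLinearMap ∘ₗ LinearMap.applyₗ a ∘ₗ LinearMap.rTensorHom V

lemma contractFst_tmul (u : U) (v : V) (f : Module.Dual k U) :
    contractFst (u ⊗ₜ[k] v) f = f u • v := by
  simp [contractFst]

lemma contractFst_add (a b : U ⊗[k] V) :
    contractFst (a + b) = contractFst a + contractFst b := by
  ext f; simp [contractFst]

lemma contractFst_zero : contractFst (0 : U ⊗[k] V) = 0 := by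
  ext f; simp [contractFst]

/-- Contraction is equivariant in the tensor and the form together. -/
lemma contractFst_map (ρU : Representation k G U) (ρ : Representation k G V) (g : G)
    (a : U ⊗[k] V) (f : Module.Dual k U) :
    contractFst (ρU.tprod ρ g a) (ρU.dual g f) = ρ g (contractFst a f) := by
  induction a with
  | zero => simp [contractFst_zero]
  | add x y hx hy => simp only [map_add, contractFst_add, LinearMap.add_apply, hx, hy]
  | tmul u v => simp [contractFst_tmul, Representation.dual_apply, Module.Dual.transpose_apply]

/-- The map `v ↦ π (- ⊗ v)` followed by contraction of `a` is the zigzag on `V`. -/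
lemma contractFst_curry_flip (π : U ⊗[k] V →ₗ[k] k) (a : U ⊗[k] V) (v : V) :
    contractFst a ((TensorProduct.curry π).flip v) = zigzag π a v := by
  induction a with
  | zero => simp [contractFst_zero, zigzag]
  | add x y hx hy =>
    rw [contractFst_add, LinearMap.add_apply, hx, hy]
    simp [zigzag]
  | tmul u w => simp [contractFst_tmul, zigzag]

/-- Composing in the other order gives the transpose of the zigzag on `U`, formed with the two
tensor factors exchanged. -/
lemma curry_flip_contractFst (π : U ⊗[k] V →ₗ[k] k) (a : U ⊗[k] V) (f : Module.Dual k U) :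
    (TensorProduct.curry π).flip (contractFst a f) =
      (zigzag (π ∘ₗ (TensorProduct.comm k V U).toLinearMap) (TensorProduct.comm k U V a)).dualMap
        f := by
  ext m
  induction a with
  | zero => simp [contractFst_zero, zigzag]
  | add x y hx hy =>
    rw [contractFst_add, LinearMap.add_apply, map_add, LinearMap.add_apply, hx, hy]
    simp [zigzag]
  | tmul u w => simp [contractFst_tmul, zigzag, mul_comm]

end Duality

/-! ### The inverse of an endotrivial module -/

/-- Let `G` be a finite group, `k` a field of characteristic `p > 0`, and
`M`, `N` finite-dimensional `kG`-modules with `M ⊗ N ≅ k ⊕ P` for some projective `P`.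
Then `N ⊕ P₁ ≅ M* ⊕ P₂` for some projective modules `P₁`, `P₂`, where `M*` is the dual
module with contragredient action. -/
theorem endotrivial_inverse_is_dual (k G : Type) [Field k] (p : ℕ) (hp : 0 < p) [CharP k p]
    [Group G] [Finite G] (M N P : Rep k G)
    [FiniteDimensional k M.V] [FiniteDimensional k N.V]
    (hP : Projective P) (h : Nonempty (M ⊗ N ≅ Rep.trivial k G k ⊞ P)) :
    ∃ P₁ P₂ : Rep k G, Projective P₁ ∧ Projective P₂ ∧
      Nonempty (N ⊞ P₁ ≅ Rep.of M.ρ.dual ⊞ P₂) := by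
  have := Fintype.ofFinite G
  obtain ⟨e⟩ := h
  let i : Rep.trivial k G k ⟶ M ⊗ N := biprod.inl ≫ e.inv
  let q : M ⊗ N ⟶ Rep.trivial k G k := e.hom ≫ biprod.fst
  have hiq : i ≫ q = 𝟙 _ := by simp [i, q]
  have hqi : IsRelTraceHom (𝟙 (M ⊗ N) - q ≫ i) := by
    have : 𝟙 (M ⊗ N) - q ≫ i = (e.hom ≫ biprod.snd) ≫ (biprod.inr ≫ e.inv) := by
      rw [sub_eq_iff_eq_add, ← cancel_epi e.inv, ← cancel_mono e.hom]
      apply biprod.hom_ext' <;> apply biprod.hom_ext <;> simp [i, q]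
    rw [this]
    exact IsRelTraceHom.of_projective hP _ _
  let π : TensorProduct k M.V N.V →ₗ[k] k := q.hom.toLinearMap
  let a : TensorProduct k M.V N.V := i.hom.toLinearMap (1 : k)
  have hπ : ∀ g x, π (M.ρ.tprod N.ρ g x) = π x := fun g x => Rep.hom_comm_apply q g x
  have ha : ∀ g, M.ρ.tprod N.ρ g a = a := fun g => (Rep.hom_comm_apply i g (1 : k)).symm
  have hπa : π a = 1 := congrArg (fun f => f.hom (1 : k)) hiq
  have htr : IsRelTrace (M.ρ.tprod N.ρ) (M.ρ.tprod N.ρ)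
      (LinearMap.id - LinearMap.toSpanSingleton k _ a ∘ₗ π) := by
    have h0 : i.hom.toLinearMap = LinearMap.toSpanSingleton k _ a :=
      LinearMap.ext_ring (one_smul k a).symm
    rw [← h0]
    exact hqi
  have hcomm : ∀ g x, TensorProduct.comm k M.V N.V (M.ρ.tprod N.ρ g x) =
      N.ρ.tprod M.ρ g (TensorProduct.comm k M.V N.V x) := by
    intro g x
    induction x with
    | zero => simp
    | add x y hx hy => simp only [map_add, hx, hy]
    | tmul u v => simp
  have hcomm' : ∀ g x, TensorProduct.comm k N.V M.V (N.ρ.tprod M.ρ g x) =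
      M.ρ.tprod N.ρ g (TensorProduct.comm k N.V M.V x) := by
    intro g x
    induction x with
    | zero => simp
    | add x y hx hy => simp only [map_add, hx, hy]
    | tmul u v => simp
  -- The zigzag on `N`, and the zigzag on `M` obtained by exchanging the two tensor factors.
  have hzN := isRelTrace_one_sub_zigzag_sq M.ρ N.ρ π hπ a ha hπa htr
  have hzM := isRelTrace_one_sub_zigzag_sq N.ρ M.ρ
    (π ∘ₗ (TensorProduct.comm k N.V M.V).toLinearMap)
    (fun g x => (congrArg π (hcomm' g x)).trans (hπ g _)) (TensorProduct.comm k M.V N.V a)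
    (fun g => by rw [← hcomm, ha]) (by simpa using hπa) (by
      have := (htr.comp_left (τ := N.ρ.tprod M.ρ) (TensorProduct.comm k M.V N.V).toLinearMap
        hcomm).comp_right (ρ := N.ρ.tprod M.ρ) (TensorProduct.comm k N.V M.V).toLinearMap hcomm'
      convert this using 1
      ext u v
      simp)
  let φ : N ⟶ Rep.of M.ρ.dual := Rep.ofHom (ρ := N.ρ) (σ := M.ρ.dual)
    { toLinearMap := (TensorProduct.curry π).flip
      isIntertwining' := fun g => by
        ext n m
        have := hπ g⁻¹ (m ⊗ₜ[k] N.ρ g n)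
        simpa [Representation.dual_apply, Module.Dual.transpose_apply] using this.symm }
  let ψ : Rep.of M.ρ.dual ⟶ N := Rep.ofHom (ρ := M.ρ.dual) (σ := N.ρ)
    { toLinearMap := contractFst a
      isIntertwining' := fun g => by
        refine LinearMap.ext fun f => ?_
        have := contractFst_map M.ρ N.ρ g a f
        rwa [ha] at this }
  have hφψ : ∀ n : N.V, ψ.hom (φ.hom n) = zigzag π a n := contractFst_curry_flip π a
  have hψφ : ∀ f : Module.Dual k M.V, φ.hom (ψ.hom f) = _ := curry_flip_contractFst π a
  refine exists_biprod_iso φ (ψ ≫ φ ≫ ψ) ?_ ?_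
  · have : (𝟙 N - φ ≫ ψ ≫ φ ≫ ψ).hom.toLinearMap =
        LinearMap.id - zigzag π a ∘ₗ zigzag π a := by
      refine LinearMap.ext fun n => ?_
      change n - ψ.hom (φ.hom (ψ.hom (φ.hom n))) = n - zigzag π a (zigzag π a n)
      rw [hφψ, hφψ]
    unfold IsRelTraceHom
    rw [this]
    exact hzN
  · unfold IsRelTraceHom
    convert hzM.dualMap using 1
    refine LinearMap.ext fun (f : Module.Dual k M.V) => ?_
    change f - φ.hom (ψ.hom (φ.hom (ψ.hom f))) = _
    rw [hψφ, hψφ]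
    ext m
    simp
end

section
/- Let G be a finite group, k a field of characteristic p > 0, and let M and N be finite-dimensional kG-modules such that M ⊗ N ≅ k ⊕ P for some projective kG-module P. Then the evaluation map ev : M ⊗ M* → k, m ⊗ f ↦ f(m), is a split surjection of kG-modules and its kernel is a projective kG-module. -/
open CategoryTheory CategoryTheory.Limits MonoidalCategory

/-!
By Higman's criterion a representation `K` of the finite group `G` is projective if and only if its
identity is a relative trace `∑ g, g κ g⁻¹` of a linear endomorphism `κ`
(`isTr_of_projective`, `projective_of_isTr`). Relative traces form an ideal among equivariant maps;
write `≡` for congruence modulo this ideal.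

The isomorphism `M ⊗ N ≅ k ⊕ P` provides an invariant `x₀ = ∑ mⱼ ⊗ nⱼ` in `M ⊗ N` and an invariant
form `ψ` on `M ⊗ N` with `ψ x₀ = 1` and `x₀ ψ ≡ 1` on `M ⊗ N`. Identify `M ⊗ M*` with `End M`, so
that `ev` becomes the trace, and let `Ψ : M ⊗ N → End M` send `m ⊗ n` to `m' ↦ ψ (m' ⊗ n) m`, so that
`tr ∘ Ψ = ψ`. Put `θ = Ψ x₀`. It commutes with `G` and `tr θ = ψ x₀ = 1`, which splits `ev`. For the
kernel it is enough to see that the idempotent `f ↦ f - tr(f) θ` of `End M` is a relative trace,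
since `ker ev` is its image. This takes two steps.

* Writing `f θ = Ψ ((f ⊗ 1) x₀)` and inserting `x₀ ψ ≡ 1` gives `f θ ≡ tr(f θ) θ` as functions of `f`.
* `θ² ≡ 1` (`isTr_one_sub_sq`): `θ` is the snake composite `M → M ⊗ N ⊗ M → M` built from `x₀` and
  `ψ`, and `θ² - 1` is a contraction of `x₀ ψ - 1`.

Replacing `f` by `f θ` in the first congruence then gives `f ≡ tr(f) θ` (`isTr_id_sub_trace`).
-/

namespace EvalSplit

open TensorProduct

/-! ### Relative traces -/

section Trace

variable {k G : Type*} [Field k] [Group G] [Fintype G]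
  {U V W X : Type*} [AddCommGroup U] [Module k U] [AddCommGroup V] [Module k V]
  [AddCommGroup W] [Module k W] [AddCommGroup X] [Module k X]

/-- A linear map `f : V → W` between representations is a *relative trace* if it is of the form
`∑ g, σ g ∘ θ ∘ ρ g⁻¹` for some linear map `θ`, not assumed to be equivariant. -/
def IsTr (ρ : Representation k G V) (σ : Representation k G W) (f : V →ₗ[k] W) : Prop :=
  ∃ θ : V →ₗ[k] W, ∀ v, f v = ∑ g : G, σ g (θ (ρ g⁻¹ v))

variable {μ : Representation k G U} {ρ : Representation k G V} {σ : Representation k G W}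
  {τ : Representation k G X}

lemma IsTr.add {f f' : V →ₗ[k] W} (h : IsTr ρ σ f) (h' : IsTr ρ σ f') :
    IsTr ρ σ (f + f') := by
  obtain ⟨θ, hθ⟩ := h
  obtain ⟨θ', hθ'⟩ := h'
  exact ⟨θ + θ', fun v => by simp [hθ, hθ', Finset.sum_add_distrib]⟩

lemma IsTr.comp_left {f : V →ₗ[k] W} (h : IsTr ρ σ f) (a : W →ₗ[k] X)
    (ha : ∀ g w, a (σ g w) = τ g (a w)) : IsTr ρ τ (a ∘ₗ f) := by
  obtain ⟨θ, hθ⟩ := h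
  exact ⟨a ∘ₗ θ, fun v => by simp [hθ, ha]⟩

lemma IsTr.comp_right {f : V →ₗ[k] W} (h : IsTr ρ σ f) (a : U →ₗ[k] V)
    (ha : ∀ g u, a (μ g u) = ρ g (a u)) : IsTr μ σ (f ∘ₗ a) := by
  obtain ⟨θ, hθ⟩ := h
  exact ⟨θ ∘ₗ a, fun v => by simp [hθ, ha]⟩

end Trace

/-! ### Endomorphisms of a module with a tensor inverse modulo projectives -/

section Core

variable {k G : Type*} [Field k] [Group G] {V W : Type*} [AddCommGroup V] [Module k V]
  [AddCommGroup W] [Module k W]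

/-- The map `V ⊗ W → End V` sending `m ⊗ n` to `m' ↦ ψ (m' ⊗ n) • m`. Under the identification
`V ⊗ V* ≃ End V` it is `id ⊗ ψ̂`, with `ψ̂ : W → V*` the adjoint of `ψ`. -/
noncomputable def toEnd (ψ : V ⊗[k] W →ₗ[k] k) : V ⊗[k] W →ₗ[k] (V →ₗ[k] V) :=
  TensorProduct.lift (LinearMap.mk₂ k
    (fun m n => (ψ ∘ₗ (TensorProduct.mk k V W).flip n).smulRight m)
    (by intros; ext; simp) (by intros; ext; simp [smul_smul, mul_comm])
    (by intros; ext; simp [add_smul]) (by intros; ext; simp [smul_smul]))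

@[simp] lemma toEnd_tmul (ψ : V ⊗[k] W →ₗ[k] k) (m : V) (n : W) (m' : V) :
    toEnd ψ (m ⊗ₜ n) m' = ψ (m' ⊗ₜ n) • m := rfl

lemma trace_toEnd [FiniteDimensional k V] (ψ : V ⊗[k] W →ₗ[k] k) (x : V ⊗[k] W) :
    LinearMap.trace k V (toEnd ψ x) = ψ x := by
  induction x with
  | zero => simp
  | add x y hx hy => simp [hx, hy]
  | tmul m n =>
    have : toEnd ψ (m ⊗ₜ n) = (ψ ∘ₗ (TensorProduct.mk k V W).flip n).smulRight m := rfl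
    rw [this, LinearMap.trace_smulRight]
    simp

lemma toEnd_rTensor (ψ : V ⊗[k] W →ₗ[k] k) (f : V →ₗ[k] V) (x : V ⊗[k] W) :
    toEnd ψ (f.rTensor W x) = f ∘ₗ toEnd ψ x := by
  induction x with
  | zero => simp
  | add x y hx hy => simp [hx, hy, LinearMap.comp_add]
  | tmul m n => ext; simp

lemma toEnd_equivariant {ρ : Representation k G V} {σ : Representation k G W}
    {ψ : V ⊗[k] W →ₗ[k] k} (hψ : ∀ g x, ψ (ρ.tprod σ g x) = ψ x) (g : G) (x : V ⊗[k] W) :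
    toEnd ψ (ρ.tprod σ g x) = ρ g ∘ₗ toEnd ψ x ∘ₗ ρ g⁻¹ := by
  induction x with
  | zero => simp
  | add x y hx hy => simp only [map_add, hx, hy, LinearMap.comp_add, LinearMap.add_comp]
  | tmul m n =>
    ext m'
    have := hψ g (ρ g⁻¹ m' ⊗ₜ n)
    simp at this
    simp [this]

/-- For `x = ∑ mⱼ ⊗ nⱼ` and an endomorphism `E` of `V ⊗ W`, the endomorphism
`m ↦ ∑ⱼ toEnd ψ (E (m ⊗ nⱼ)) mⱼ` of `V`. -/
noncomputable def contr (ψ : V ⊗[k] W →ₗ[k] k) (E : V ⊗[k] W →ₗ[k] V ⊗[k] W) :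
    V ⊗[k] W →ₗ[k] (V →ₗ[k] V) :=
  TensorProduct.lift (LinearMap.mk₂ k
    (fun m n => (toEnd ψ ∘ₗ E ∘ₗ (TensorProduct.mk k V W).flip n).flip m)
    (by intros; ext; simp) (by intros; ext; simp)
    (by intros; ext; simp) (by intros; ext; simp))

@[simp] lemma contr_tmul (ψ : V ⊗[k] W →ₗ[k] k) (E : V ⊗[k] W →ₗ[k] V ⊗[k] W) (m : V) (n : W)
    (m' : V) : contr ψ E (m ⊗ₜ n) m' = toEnd ψ (E (m' ⊗ₜ n)) m := rfl

/-- In `contr ψ E x`, the identity contributes the scalar `ψ x` and the rank-one map `y ψ`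
contributes the composite `toEnd ψ y ∘ toEnd ψ x`. -/
lemma contr_sub_smulRight (ψ : V ⊗[k] W →ₗ[k] k) (x y : V ⊗[k] W) (v : V) :
    contr ψ (LinearMap.id - ψ.smulRight y) x v = ψ x • v - toEnd ψ y (toEnd ψ x v) := by
  induction x with
  | zero => simp
  | add x z hx hz => simp only [map_add, LinearMap.add_apply, hx, hz, add_smul]; abel
  | tmul m n => simp

/-- Contraction against `x` turns a trace `E` of `ε` into a sum of conjugates. When `x` is invariant
this is the trace of `contr ψ ε x`. -/
lemma contr_sum [Fintype G] {ρ : Representation k G V} {σ : Representation k G W}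
    {ψ : V ⊗[k] W →ₗ[k] k} (hψ : ∀ g x, ψ (ρ.tprod σ g x) = ψ x)
    {E ε : V ⊗[k] W →ₗ[k] V ⊗[k] W}
    (hE : ∀ x, E x = ∑ g : G, ρ.tprod σ g (ε (ρ.tprod σ g⁻¹ x))) (x : V ⊗[k] W) (v : V) :
    contr ψ E x v = ∑ g : G, ρ g (contr ψ ε (ρ.tprod σ g⁻¹ x) (ρ g⁻¹ v)) := by
  induction x with
  | zero => simp
  | add x z hx hz => simp only [map_add, LinearMap.add_apply, hx, hz, Finset.sum_add_distrib]
  | tmul m n =>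
    rw [contr_tmul, hE, map_sum, LinearMap.sum_apply]
    refine Finset.sum_congr rfl fun g _ => ?_
    rw [toEnd_equivariant hψ]
    simp

/-- The snake endomorphism `θ = toEnd ψ x₀` squares to the identity modulo relative traces, because
`1 - θ²` is the contraction of `1 - x₀ ψ`. -/
lemma isTr_one_sub_sq [Fintype G] {ρ : Representation k G V} {σ : Representation k G W}
    {ψ : V ⊗[k] W →ₗ[k] k} (hψ : ∀ g x, ψ (ρ.tprod σ g x) = ψ x)
    {x₀ : V ⊗[k] W} (hx₀ : ∀ g, ρ.tprod σ g x₀ = x₀) (h1 : ψ x₀ = 1)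
    (hE : IsTr (ρ.tprod σ) (ρ.tprod σ) (LinearMap.id - ψ.smulRight x₀)) :
    IsTr ρ ρ (LinearMap.id - toEnd ψ x₀ ∘ₗ toEnd ψ x₀) := by
  obtain ⟨ε, hε⟩ := hE
  refine ⟨contr ψ ε x₀, fun v => ?_⟩
  have h2 := contr_sub_smulRight ψ x₀ x₀ v
  rw [contr_sum hψ hε] at h2
  simp only [hx₀, h1, one_smul] at h2
  simp [h2]

/-- `f ↦ f ∘ a` is a relative trace if `a` is: if `a` is the trace of `η`, then precomposition with
`a` is the trace of precomposition with `η`. -/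
lemma isTr_precomp [Fintype G] {ρ : Representation k G V} {a : V →ₗ[k] V} (ha : IsTr ρ ρ a) :
    IsTr (ρ.linHom ρ) (ρ.linHom ρ) (LinearMap.lcomp k V a) := by
  obtain ⟨η, hη⟩ := ha
  refine ⟨LinearMap.lcomp k V η, fun f => ?_⟩
  ext v
  simp [hη, Representation.linHom_apply]

/-- With `θ = toEnd ψ x₀`, the endomorphism `f ↦ f - tr(f) θ` of `End V` is a relative trace.
Modulo relative traces, `f θ = toEnd ψ ((f ⊗ 1) x₀)` agrees with `tr(f θ) θ`; replacing `f` by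
`f θ` and using `θ² ≡ 1` gives the claim. -/
lemma isTr_id_sub_trace [Fintype G] [FiniteDimensional k V]
    {ρ : Representation k G V} {σ : Representation k G W}
    {ψ : V ⊗[k] W →ₗ[k] k} (hψ : ∀ g x, ψ (ρ.tprod σ g x) = ψ x)
    {x₀ : V ⊗[k] W} (hx₀ : ∀ g, ρ.tprod σ g x₀ = x₀) (h1 : ψ x₀ = 1)
    (hE : IsTr (ρ.tprod σ) (ρ.tprod σ) (LinearMap.id - ψ.smulRight x₀)) :
    IsTr (ρ.linHom ρ) (ρ.linHom ρ)
      (LinearMap.id - (LinearMap.trace k V).smulRight (toEnd ψ x₀)) := by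
  set θ := toEnd ψ x₀ with hθ
  have hθg : ∀ g, ρ g ∘ₗ θ ∘ₗ ρ g⁻¹ = θ := fun g => by
    rw [hθ, ← toEnd_equivariant hψ, hx₀]
  have hθc : ∀ g v, θ (ρ g v) = ρ g (θ v) := fun g v => by
    conv_lhs => rw [← hθg g]
    simp
  have htr : ∀ g f, LinearMap.trace k V (ρ.linHom ρ g f) = LinearMap.trace k V f := fun g f => by
    rw [Representation.linHom_apply, LinearMap.trace_comp_comm', LinearMap.comp_assoc]
    congr 1
    ext v
    simp
  let Φ : (V →ₗ[k] V) →ₗ[k] V ⊗[k] W :=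
    (LinearMap.applyₗ x₀ ∘ₗ LinearMap.rTensorHom W) ∘ₗ LinearMap.lcomp k V θ
  have hΦ : ∀ f, Φ f = (f ∘ₗ θ).rTensor W x₀ := fun f => rfl
  have hΦg : ∀ g f, Φ (ρ.linHom ρ g f) = ρ.tprod σ g (Φ f) := fun g f => by
    have h3 : (ρ.linHom ρ g f) ∘ₗ θ = ρ g ∘ₗ (f ∘ₗ θ) ∘ₗ ρ g⁻¹ := by
      ext v
      simp [Representation.linHom_apply, hθc]
    have h4 : ∀ y, (ρ g ∘ₗ (f ∘ₗ θ) ∘ₗ ρ g⁻¹).rTensor W (ρ.tprod σ g y) =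
        ρ.tprod σ g ((f ∘ₗ θ).rTensor W y) := fun y => by
      induction y with
      | zero => simp
      | add x z hx hz => simp only [map_add, hx, hz]
      | tmul m n => simp
    rw [hΦ, hΦ, h3, ← h4, hx₀]
  have hA := (hE.comp_right Φ hΦg).comp_left (τ := ρ.linHom ρ) (toEnd ψ)
    (fun g x => toEnd_equivariant hψ g x)
  have hB := (isTr_precomp (isTr_one_sub_sq hψ hx₀ h1 hE)).comp_left (τ := ρ.linHom ρ)
    (LinearMap.id - (LinearMap.trace k V).smulRight θ) (fun g f => by
      simp only [LinearMap.sub_apply, LinearMap.id_apply, LinearMap.smulRight_apply, htr, map_sub,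
        map_smul]
      congr 2
      exact (hθg g).symm)
  convert hA.add hB using 1
  refine LinearMap.ext fun f => ?_
  have h5 : ψ (Φ f) = LinearMap.trace k V (f ∘ₗ θ ∘ₗ θ) := by
    rw [← trace_toEnd ψ, hΦ, toEnd_rTensor, LinearMap.comp_assoc]
  have h6 : toEnd ψ (Φ f) = f ∘ₗ θ ∘ₗ θ := by
    rw [hΦ, toEnd_rTensor, LinearMap.comp_assoc]
  have h7 : f ∘ₗ (LinearMap.id - θ ∘ₗ θ) = f - f ∘ₗ θ ∘ₗ θ := by
    rw [LinearMap.comp_sub, LinearMap.comp_id]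
  rw [← hθ]
  simp only [LinearMap.sub_apply, LinearMap.add_apply, LinearMap.comp_apply, LinearMap.id_apply,
    LinearMap.smulRight_apply, map_sub, map_smul, h5, h6, LinearMap.lcomp_apply', h7]
  abel

/-- The isomorphism `V ⊗ V* ≃ End V` sending `v ⊗ f` to `w ↦ f w • v`. -/
noncomputable def endEquiv (k V : Type*) [Field k] [AddCommGroup V] [Module k V]
    [FiniteDimensional k V] : V ⊗[k] Module.Dual k V ≃ₗ[k] (V →ₗ[k] V) :=
  TensorProduct.comm k V (Module.Dual k V) ≪≫ₗ dualTensorHomEquiv k V V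

lemma endEquiv_tmul [FiniteDimensional k V] (v : V) (f : Module.Dual k V) (w : V) :
    endEquiv k V (v ⊗ₜ f) w = f w • v := by
  simp [endEquiv]

lemma endEquiv_equivariant [FiniteDimensional k V] (ρ : Representation k G V) (g : G)
    (x : V ⊗[k] Module.Dual k V) :
    endEquiv k V (ρ.tprod ρ.dual g x) = ρ.linHom ρ g (endEquiv k V x) := by
  induction x with
  | zero => simp
  | add x z hx hz => simp only [map_add, hx, hz]
  | tmul m n =>
    ext v
    simp [Representation.linHom_apply, endEquiv_tmul, Module.Dual.transpose_apply]

lemma trace_endEquiv [FiniteDimensional k V] (x : V ⊗[k] Module.Dual k V) :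
    LinearMap.trace k V (endEquiv k V x) = TensorProduct.lift (Module.Dual.eval k V) x := by
  induction x with
  | zero => simp
  | add x z hx hz => simp only [map_add, hx, hz]
  | tmul m n => simp [endEquiv]

/-- The evaluation map on `V ⊗ V*` has an invariant right inverse `1 ↦ s`, and
`1 - s ∘ ev` is a relative trace. -/
lemma exists_section [Fintype G] [FiniteDimensional k V]
    {ρ : Representation k G V} {σ : Representation k G W}
    {ψ : V ⊗[k] W →ₗ[k] k} (hψ : ∀ g x, ψ (ρ.tprod σ g x) = ψ x)
    {x₀ : V ⊗[k] W} (hx₀ : ∀ g, ρ.tprod σ g x₀ = x₀) (h1 : ψ x₀ = 1)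
    (hE : IsTr (ρ.tprod σ) (ρ.tprod σ) (LinearMap.id - ψ.smulRight x₀)) :
    ∃ s : V ⊗[k] Module.Dual k V, (∀ g, ρ.tprod ρ.dual g s = s) ∧
      TensorProduct.lift (Module.Dual.eval k V) s = 1 ∧
      IsTr (ρ.tprod ρ.dual) (ρ.tprod ρ.dual)
        (LinearMap.id - (TensorProduct.lift (Module.Dual.eval k V)).smulRight s) := by
  have hinv : ∀ g f, (endEquiv k V).symm (ρ.linHom ρ g f) =
      ρ.tprod ρ.dual g ((endEquiv k V).symm f) := fun g f => by
    rw [LinearEquiv.symm_apply_eq, endEquiv_equivariant, LinearEquiv.apply_symm_apply]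
  refine ⟨(endEquiv k V).symm (toEnd ψ x₀), fun g => ?_, ?_, ?_⟩
  · rw [← hinv]
    congr 1
    exact (toEnd_equivariant hψ g x₀).symm.trans (by rw [hx₀])
  · rw [← trace_endEquiv, LinearEquiv.apply_symm_apply, trace_toEnd, h1]
  · convert ((isTr_id_sub_trace hψ hx₀ h1 hE).comp_right (endEquiv k V).toLinearMap
      (endEquiv_equivariant ρ)).comp_left (τ := ρ.tprod ρ.dual)
      (endEquiv k V).symm.toLinearMap hinv using 1
    refine LinearMap.ext fun x => ?_
    simp [← trace_endEquiv]

end Core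

/-! ### Higman's criterion for projectivity -/

section Projective

variable {k G : Type} [Field k] [Group G]

/-- The representation on functions `G → V` with `(g • F) h = ρ g (F (g⁻¹ h))`. For finite `G`
this is `k[G] ⊗ V` with diagonal action. -/
def funRep {V : Type} [AddCommGroup V] [Module k V] (ρ : Representation k G V) :
    Representation k G (G → V) where
  toFun g := LinearMap.pi fun h => ρ g ∘ₗ LinearMap.proj (g⁻¹ * h)
  map_one' := by ext; simp
  map_mul' a b := by
    refine LinearMap.ext fun F => funext fun h => ?_
    simp [mul_assoc]

lemma funRep_apply {V : Type} [AddCommGroup V] [Module k V] (ρ : Representation k G V)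
    (g : G) (F : G → V) (h : G) : funRep ρ g F h = ρ g (F (g⁻¹ * h)) := rfl

lemma isTr_id_funRep [Fintype G] {V : Type} [AddCommGroup V] [Module k V] (ρ : Representation k G V) :
    IsTr (funRep ρ) (funRep ρ) LinearMap.id := by
  classical
  refine ⟨LinearMap.single k (fun _ => V) 1 ∘ₗ LinearMap.proj 1, fun F => funext fun h => ?_⟩
  rw [Finset.sum_apply, Finset.sum_eq_single h]
  · simp [funRep_apply]
  · intro g _ hg
    have : g⁻¹ * h ≠ 1 := fun h' => hg (inv_mul_eq_one.mp h')
    simp [funRep_apply, Pi.single_eq_of_ne this]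
  · simp

/-- The identity of a projective `P` is a relative trace, because `P` is a direct summand of the
representation `funRep P.ρ` on `G → P` via the summation map. -/
lemma isTr_of_projective [Fintype G] (P : Rep.{0} k G) (hP : Projective P) :
    IsTr P.ρ P.ρ LinearMap.id := by
  classical
  let π : Rep.of (funRep P.ρ) ⟶ P := Rep.ofHom (σ := P.ρ)
    ⟨∑ h : G, LinearMap.proj h, fun g => by
      refine LinearMap.ext fun F => ?_
      simp only [LinearMap.comp_apply, LinearMap.sum_apply, LinearMap.proj_apply, funRep_apply,
        map_sum]
      exact Fintype.sum_equiv (Equiv.mulLeft g⁻¹) _ _ fun _ => rfl⟩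
  have hπ : Epi π := by
    rw [Rep.epi_iff_surjective]
    intro x
    refine ⟨Pi.single 1 x, ?_⟩
    change (∑ h : G, LinearMap.proj h : (G → P.V) →ₗ[k] P.V) (Pi.single 1 x) = x
    simp [LinearMap.sum_apply]
  have hs : Projective.factorThru (𝟙 P) π ≫ π = 𝟙 P := Projective.factorThru_comp _ _
  have := ((isTr_id_funRep P.ρ).comp_left (τ := P.ρ) π.hom.toLinearMap
    (Rep.hom_comm_apply π)).comp_right (μ := P.ρ)
      (Projective.factorThru (𝟙 P) π).hom.toLinearMap
      (Rep.hom_comm_apply (Projective.factorThru (𝟙 P) π))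
  convert this using 1
  exact (congrArg (fun f : P ⟶ P => f.hom.toLinearMap) hs).symm

/-- Higman's criterion: if the identity of `K` is the trace of `κ`, then a lift of `f : K ⟶ A` along
an epimorphism is obtained as the trace of a linear lift of `f` precomposed with `κ`. -/
lemma projective_of_isTr [Fintype G] (K : Rep.{0} k G) (hK : IsTr K.ρ K.ρ LinearMap.id) :
    Projective K where
  factors {A B} f e he := by
    rw [Rep.epi_iff_surjective] at he
    obtain ⟨κ, hκ⟩ := hK
    obtain ⟨t, ht⟩ := e.hom.toLinearMap.exists_rightInverse_of_surjective
      (LinearMap.range_eq_top.mpr he)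
    have ht' : ∀ b, e.hom (t b) = b := fun b => congr($ht b)
    -- averaging the linear lift `t ∘ f ∘ κ` over `G`
    let l : K.V →ₗ[k] A.V := ∑ g : G, A.ρ g ∘ₗ (t ∘ₗ f.hom.toLinearMap ∘ₗ κ) ∘ₗ K.ρ g⁻¹
    have hl : ∀ v, l v = ∑ g : G, A.ρ g (t (f.hom (κ (K.ρ g⁻¹ v)))) := fun v => by
      simp only [l, LinearMap.sum_apply]; rfl
    refine ⟨Rep.ofHom (σ := A.ρ) (ρ := K.ρ) ⟨l, fun g => ?_⟩, ?_⟩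
    · refine LinearMap.ext fun v => ?_
      simp only [LinearMap.comp_apply, hl, map_sum]
      refine Fintype.sum_equiv (Equiv.mulLeft g⁻¹) _ _ fun h => ?_
      simp [← Module.End.mul_apply, ← map_mul]
    · ext v
      change e.hom (l v) = f.hom v
      conv_rhs => rw [show v = _ from hκ v]
      rw [hl]
      simp only [map_sum]
      refine Finset.sum_congr rfl fun g _ => ?_
      rw [Rep.hom_comm_apply, ht', Rep.hom_comm_apply]

end Projective

end EvalSplit

/-! ### The evaluation map -/

open EvalSplit in
/-- Let `G` be a finite group, `k` a field of characteristic `p > 0`, and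
`M`, `N` finite-dimensional `kG`-modules with `M ⊗ N ≅ k ⊕ P` for some projective `P`.
Then the evaluation map `ev : M ⊗ M* → k`, `m ⊗ f ↦ f(m)`, is a split surjection of
`kG`-modules and its kernel is a projective `kG`-module.  (The existential over `ev`
asserts in particular that the evaluation linear map is `G`-equivariant.) -/
theorem evaluation_split_surjection_projective_kernel (k G : Type) [Field k] (p : ℕ)
    (hp : 0 < p) [CharP k p] [Group G] [Finite G] (M N P : Rep k G)
    [FiniteDimensional k M.V] [FiniteDimensional k N.V]
    (hP : Projective P) (h : Nonempty (M ⊗ N ≅ Rep.trivial k G k ⊞ P)) :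
    ∃ ev : M ⊗ Rep.of M.ρ.dual ⟶ Rep.trivial k G k,
      ev.hom = TensorProduct.lift (Module.Dual.eval k M.V) ∧
      Function.Surjective ev.hom ∧
      (∃ s : Rep.trivial k G k ⟶ M ⊗ Rep.of M.ρ.dual, s ≫ ev = 𝟙 (Rep.trivial k G k)) ∧
      Projective (kernel ev) := by
  obtain ⟨e⟩ := h
  cases nonempty_fintype G
  let φ : Rep.trivial k G k ⟶ M ⊗ N := biprod.inl ≫ e.inv
  let ψ : M ⊗ N ⟶ Rep.trivial k G k := e.hom ≫ biprod.fst
  have hφψ : φ ≫ ψ = 𝟙 _ := by simp [φ, ψ]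
  let a : M ⊗ N ⟶ P := e.hom ≫ biprod.snd
  let b : P ⟶ M ⊗ N := biprod.inr ≫ e.inv
  have hab : a ≫ b = 𝟙 _ - ψ ≫ φ := by
    -- conjugate `fst ≫ inl + snd ≫ inr = 𝟙` by `e`
    have h2 := congr(e.hom ≫ $(biprod.total (X := Rep.trivial k G k) (Y := P)) ≫ e.inv)
    simp only [Preadditive.add_comp, Preadditive.comp_add, Category.id_comp, Category.assoc,
      Iso.hom_inv_id] at h2
    simp only [a, b, ψ, φ, Category.assoc, ← h2]
    abel
  have hE := ((isTr_of_projective P hP).comp_left (τ := (M ⊗ N).ρ) b.hom.toLinearMap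
    (Rep.hom_comm_apply b)).comp_right (μ := (M ⊗ N).ρ) a.hom.toLinearMap (Rep.hom_comm_apply a)
  obtain ⟨s, hsg, hs1, hsE⟩ := exists_section (k := k) (ρ := M.ρ) (σ := N.ρ)
    (ψ := ψ.hom.toLinearMap) (x₀ := φ.hom (1 : k))
    (fun g x => Rep.hom_comm_apply ψ g x) (fun g => (Rep.hom_comm_apply φ g (1 : k)).symm)
    congr(($hφψ).hom (1 : k)) (by
      obtain ⟨ε, hε⟩ := hE
      refine ⟨ε, fun x => Eq.trans (Eq.trans ?_ congr(($hab).hom x).symm) (hε x)⟩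
      change x - ψ.hom x • φ.hom (1 : k) = x - φ.hom (ψ.hom x)
      congr 1
      exact (φ.hom.toLinearMap.map_smul (ψ.hom x) (1 : k)).symm.trans
        (congrArg φ.hom (mul_one (ψ.hom x))))
  let ev : M ⊗ Rep.of M.ρ.dual ⟶ Rep.trivial k G k :=
    Rep.ofHom (ρ := M.ρ.tprod M.ρ.dual) (σ := Representation.trivial k G k)
      ⟨TensorProduct.lift (Module.Dual.eval k M.V), fun g => by
        ext m f
        simp [Module.Dual.transpose_apply]⟩
  let sec : Rep.trivial k G k ⟶ M ⊗ Rep.of M.ρ.dual :=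
    Rep.ofHom (σ := M.ρ.tprod M.ρ.dual) (ρ := Representation.trivial k G k)
      ⟨LinearMap.toSpanSingleton k _ s, fun g => by
        refine LinearMap.ext_ring ?_
        simpa using (hsg g).symm⟩
  have hsec : sec ≫ ev = 𝟙 (Rep.trivial k G k) := by
    refine Rep.hom_ext (Representation.IntertwiningMap.ext (LinearMap.ext_ring ?_))
    change TensorProduct.lift (Module.Dual.eval k M.V) ((1 : k) • s) = 1
    rw [one_smul, hs1]
  refine ⟨ev, rfl, fun c => ⟨sec.hom c, congr(($hsec).hom c)⟩, ⟨sec, hsec⟩, ?_⟩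
  let r : M ⊗ Rep.of M.ρ.dual ⟶ kernel ev := kernel.lift ev (𝟙 _ - ev ≫ sec) (by
    simp [Preadditive.sub_comp, hsec])
  have hr : r ≫ kernel.ι ev = 𝟙 _ - ev ≫ sec := kernel.lift_ι _ _ _
  have hι : kernel.ι ev ≫ (𝟙 _ - ev ≫ sec) ≫ r = 𝟙 _ := by
    rw [← cancel_mono (kernel.ι ev)]
    simp [hr, Preadditive.comp_sub, Preadditive.sub_comp]
  apply projective_of_isTr
  convert (hsE.comp_left (τ := (kernel ev).ρ) r.hom.toLinearMap
    (Rep.hom_comm_apply r)).comp_right (μ := (kernel ev).ρ) (kernel.ι ev).hom.toLinearMap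
    (Rep.hom_comm_apply (kernel.ι ev)) using 1
  refine LinearMap.ext fun x => ?_
  exact congr(($hι).hom x).symm
end

section
/- Let G be a finite group and k a field of characteristic p > 0. If M and N are possibly infinite-dimensional kG-modules such that M ⊗ N ≅ k ⊕ P for some projective kG-module P, then M ≅ M̄ ⊕ Q where Q is a projective kG-module and M̄ is a finite-dimensional indecomposable kG-module that is endotrivial, i.e. there exists a finite-dimensional kG-module N̄ with M̄ ⊗ N̄ ≅ k ⊕ P' for some projective kG-module P'. -/
/-!
Write `f : 𝟙_ ⟶ M ⊗ N` and `g : M ⊗ N ⟶ 𝟙_` for the inclusion and projection of the trivial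
summand, and call a morphism stably zero (`IsTrace`) if it is a sum `∑ g, g θ g⁻¹` of conjugates of
a linear map `θ`. By Higman's criterion (`projective_iff`) a module, of any dimension, is projective
if and only if its identity is stably zero; the stably zero morphisms form an ideal that is closed
under tensoring.

*Finiteness.* The identity of `M ⊗ N` is stably equal to `g ≫ f`. Taking a partial trace over `N`
(`partialTrace`), the identity of `M` is stably equal to the partial trace `φ` of `g ≫ f`, and `φ`
has finite rank because `f 1` is a finite sum of pure tensors (`finite_range_partialTrace`).
Fitting's lemma for `φ` splits `M` as a finite-dimensional module, on which `φ` is invertible, and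
one on which `φ` is nilpotent. On the latter `1 = φ` stably, so `1` is stably zero and that summand
is projective (`exists_finite_stableSummand`). No decomposition theorem for infinite-dimensional
modules is used.

*Indecomposability.* If `|G| = 0` in `k`, then stably zero endomorphisms of `𝟙_` vanish, and
`e ↦ f ≫ (e ⊗ 1) ≫ g` is multiplicative with values in `End 𝟙_ = k`. Hence it kills one of any two
orthogonal idempotents, and by another partial trace the corresponding summand is projective
(`isTrace_or_isTrace`). If `|G|` is invertible in `k`, every module is projective. In both cases a
nonzero finite-dimensional summand of `M` with projective complement that has the least dimension is
indecomposable.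

*Endotriviality.* If `|G| = 0` in `k`, the finite-dimensional parts of `M` and `N` tensor to a
summand of `M ⊗ N` with projective complement, which must contain the trivial module
(`StableSummand.unit_of_tensor`). If `|G|` is invertible, the dual module serves (`exists_dual`).
-/

open CategoryTheory CategoryTheory.Limits MonoidalCategory

namespace StableRep

variable {k G : Type} [Field k] [Group G] {L M N : Rep.{0} k G}

/-! ### The trivial module and dimensions -/

/-- `End 𝟙_ = k` has no zero divisors. -/
lemma unit_comp_eq_zero {u v : 𝟙_ (Rep.{0} k G) ⟶ 𝟙_ (Rep.{0} k G)} (h : u ≫ v = 0) :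
    u = 0 ∨ v = 0 := by
  have key : ∀ (w : 𝟙_ (Rep.{0} k G) ⟶ 𝟙_ (Rep.{0} k G)) (x : k),
      w.hom.toLinearMap x = x * w.hom.toLinearMap (1 : k) := fun w x => by
    have := w.hom.toLinearMap.map_smul x (1 : k)
    simpa using this
  have hz : ∀ (w : 𝟙_ (Rep.{0} k G) ⟶ 𝟙_ (Rep.{0} k G)),
      w.hom.toLinearMap (1 : k) = (0 : k) → w = 0 := by
    intro w hw
    apply Rep.hom_ext
    apply Representation.IntertwiningMap.ext
    refine LinearMap.ext fun x => ?_
    rw [key w x, hw, mul_zero]; rfl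
  have h1 : (u ≫ v).hom.toLinearMap (1 : k) = (0 : k) := by rw [h]; rfl
  have h2 : (u ≫ v).hom.toLinearMap (1 : k) = v.hom.toLinearMap (u.hom.toLinearMap (1 : k)) := rfl
  rw [h2, key v] at h1
  rcases mul_eq_zero.1 h1 with h | h
  · exact Or.inl (hz u h)
  · exact Or.inr (hz v h)

lemma id_unit_ne_zero : 𝟙 (𝟙_ (Rep.{0} k G)) ≠ 0 := fun h => by
  have : (Rep.Hom.hom (𝟙 (𝟙_ (Rep.{0} k G)))).toLinearMap (1 : k) = (0 : k) := by rw [h]; rfl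
  exact one_ne_zero (α := k) this

lemma finrank_lt_of_iso {A B C : Rep.{0} k G} [Module.Finite k A.V] (e : A ≅ B ⊞ C)
    (hC : ¬ IsZero C) : Module.Finite k B.V ∧ Module.finrank k B.V < Module.finrank k A.V := by
  set i : B ⟶ A := biprod.inl ≫ e.inv with hi
  have hinj : Function.Injective i.hom.toLinearMap :=
    (Rep.mono_iff_injective i).1 inferInstance
  refine ⟨Module.Finite.of_injective _ hinj, ?_⟩
  rw [← LinearMap.finrank_range_of_inj hinj]
  refine Submodule.finrank_lt fun htop => hC ?_
  rw [IsZero.iff_id_eq_zero]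
  apply Rep.hom_ext
  apply Representation.IntertwiningMap.ext
  refine LinearMap.ext fun c => ?_
  obtain ⟨b, hb⟩ : (biprod.inr ≫ e.inv : C ⟶ A).hom.toLinearMap c ∈
    LinearMap.range i.hom.toLinearMap := htop ▸ Submodule.mem_top
  have h1 := congrArg (e.hom ≫ biprod.snd).hom.toLinearMap hb
  have h2 : i ≫ e.hom ≫ biprod.snd = 0 := by simp [hi]
  have h3 : (biprod.inr ≫ e.inv) ≫ e.hom ≫ biprod.snd = 𝟙 C := by simp
  rw [← h3]
  refine h1.symm.trans ?_
  change (i ≫ e.hom ≫ biprod.snd).hom.toLinearMap b = _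
  rw [h2]
  rfl

/-! ### Partial traces -/

/-- The partial trace over `N` of an endomorphism `u` of `M ⊗ N`, formed with a coevaluation
`f : 𝟙_ ⟶ M ⊗ N` and an evaluation `g : M ⊗ N ⟶ 𝟙_`, which need not satisfy the triangle
identities. In elements, with `f 1 = ∑ a ⊗ b` and `u (m ⊗ b) = ∑ x ⊗ y`, it sends `m` to
`∑ g (a ⊗ y) • x`. -/
noncomputable def partialTrace (f : 𝟙_ (Rep.{0} k G) ⟶ M ⊗ N) (g : M ⊗ N ⟶ 𝟙_ (Rep.{0} k G))
    (u : M ⊗ N ⟶ M ⊗ N) : M ⟶ M :=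
  (ρ_ M).inv ≫ M ◁ (f ≫ (β_ M N).hom) ≫ (α_ M N M).inv ≫ u ▷ M ≫ (α_ M N M).hom ≫
    M ◁ ((β_ M N).inv ≫ g) ≫ (ρ_ M).hom

variable {f : 𝟙_ (Rep.{0} k G) ⟶ M ⊗ N} {g : M ⊗ N ⟶ 𝟙_ (Rep.{0} k G)}

/-- Only `f ≫ g = 𝟙` is needed here, not the triangle identities: it makes the partial trace of
`e ⊗ 1` equal to `e`. -/
lemma partialTrace_whiskerRight (hfg : f ≫ g = 𝟙 _) (e : M ⟶ M) :
    partialTrace f g (e ▷ N) = e := by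
  have h1 : (f ≫ (β_ M N).hom) ≫ ((β_ M N).inv ≫ g) = 𝟙 _ := by simp [hfg]
  have h2 : (α_ M N M).inv ≫ e ▷ N ▷ M ≫ (α_ M N M).hom = e ▷ (N ⊗ M) := by simp
  have h3 : partialTrace f g (e ▷ N) = (ρ_ M).inv ≫ M ◁ (f ≫ (β_ M N).hom) ≫
      ((α_ M N M).inv ≫ e ▷ N ▷ M ≫ (α_ M N M).hom) ≫
    M ◁ ((β_ M N).inv ≫ g) ≫ (ρ_ M).hom := by simp only [partialTrace, Category.assoc]
  rw [h3, h2, ← whisker_exchange_assoc, ← whiskerLeft_comp_assoc, h1]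
  simp

/-- For a fixed `t`, contracting the last two factors of `t ⊗ m` lands, for every `m`, in the span
of the finitely many left components of `t`. -/
lemma exists_finite_contract (h : N ⊗ M ⟶ 𝟙_ (Rep.{0} k G)) (t : TensorProduct k M.V N.V) :
    ∃ W : Submodule k M.V, Module.Finite k W ∧ ∀ m : M.V,
      ((α_ M N M).hom ≫ M ◁ h ≫ (ρ_ M).hom).hom.toLinearMap (t ⊗ₜ[k] m) ∈ W := by
  induction t using TensorProduct.induction_on with
  | zero => exact ⟨⊥, inferInstance, fun m => by rw [TensorProduct.zero_tmul, map_zero]; simp⟩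
  | tmul a b =>
    refine ⟨Submodule.span k {a}, inferInstance, fun m => ?_⟩
    exact Submodule.smul_mem (Submodule.span k {a}) (h.hom.toLinearMap (b ⊗ₜ[k] m) : k)
      (Submodule.mem_span_singleton_self a)
  | add x y hx hy =>
    obtain ⟨W, _, hW⟩ := hx
    obtain ⟨W', _, hW'⟩ := hy
    refine ⟨W ⊔ W', inferInstance, fun m => ?_⟩
    rw [TensorProduct.add_tmul, map_add]
    exact add_mem (Submodule.mem_sup_left (hW m)) (Submodule.mem_sup_right (hW' m))

/-- The partial trace of `g ≫ f` has finite rank, because it factors through `m ↦ f 1 ⊗ m` followed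
by a contraction. This is where finite-dimensionality enters the proof. -/
lemma finite_range_partialTrace (f : 𝟙_ (Rep.{0} k G) ⟶ M ⊗ N) (g : M ⊗ N ⟶ 𝟙_ (Rep.{0} k G)) :
    Module.Finite k (LinearMap.range (partialTrace f g (g ≫ f)).hom.toLinearMap) := by
  obtain ⟨W, _, hW⟩ := exists_finite_contract ((β_ M N).inv ≫ g) (f.hom.toLinearMap (1 : k))
  have key : ∀ z : TensorProduct k k M.V,
      (f ▷ M ≫ (α_ M N M).hom ≫ M ◁ ((β_ M N).inv ≫ g) ≫ (ρ_ M).hom).hom.toLinearMap z ∈ W := by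
    intro z
    induction z using TensorProduct.induction_on with
    | zero => rw [map_zero]; exact zero_mem W
    | tmul c m =>
      have h1 : c ⊗ₜ[k] m = (1 : k) ⊗ₜ[k] (c • m) := by
        rw [← TensorProduct.smul_tmul, smul_eq_mul, mul_one]
      rw [h1]
      exact hW (c • m)
    | add x y hx hy => rw [map_add]; exact add_mem hx hy
  have h2 : partialTrace f g (g ≫ f) =
      ((ρ_ M).inv ≫ M ◁ (f ≫ (β_ M N).hom) ≫ (α_ M N M).inv ≫ g ▷ M) ≫
      (f ▷ M ≫ (α_ M N M).hom ≫ M ◁ ((β_ M N).inv ≫ g) ≫ (ρ_ M).hom) := by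
    simp only [partialTrace, Category.assoc, comp_whiskerRight]
  have h3 : LinearMap.range (partialTrace f g (g ≫ f)).hom.toLinearMap ≤ W := by
    rintro _ ⟨x, rfl⟩
    rw [h2]
    exact key _
  exact Submodule.finiteDimensional_of_le h3

/-! ### Fitting decomposition of algebraic endomorphisms -/

open Polynomial in
/-- A finite-rank endomorphism is algebraic: `χ * X` kills it, with `χ` the characteristic
polynomial of its restriction to its range. -/
lemma exists_aeval_eq_zero (φ : M ⟶ M)
    (h : Module.Finite k (LinearMap.range φ.hom.toLinearMap)) :
    ∃ p : k[X], p ≠ 0 ∧ aeval (R := k) (A := End M) φ p = 0 := by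
  let T : Module.End k (LinearMap.range φ.hom.toLinearMap) :=
    φ.hom.toLinearMap.restrict (fun x _ => ⟨x, rfl⟩)
  have key : ∀ (q : k[X]) (x : LinearMap.range φ.hom.toLinearMap),
      ((aeval T q x : LinearMap.range φ.hom.toLinearMap) : M.V)
        = (aeval (R := k) (A := End M) φ q : M ⟶ M).hom x := by
    intro q
    induction q using Polynomial.induction_on' with
    | add p q hp hq =>
      intro x
      rw [map_add, map_add, LinearMap.add_apply, Submodule.coe_add, hp, hq]
      rfl
    | monomial n a =>
      intro x
      rw [aeval_monomial, aeval_monomial]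
      induction n generalizing x with
      | zero => simp; rfl
      | succ n ih =>
        rw [pow_succ, pow_succ, ← mul_assoc, ← mul_assoc]
        exact ih (T x)
  refine ⟨T.charpoly * X, mul_ne_zero T.charpoly_monic.ne_zero X_ne_zero, ?_⟩
  apply Rep.hom_ext
  apply Representation.IntertwiningMap.ext
  refine LinearMap.ext fun x => ?_
  rw [map_mul, aeval_X]
  refine (key T.charpoly ⟨φ.hom.toLinearMap x, x, rfl⟩).symm.trans ?_
  rw [LinearMap.aeval_self_charpoly]
  rfl

open Polynomial in
/-- Fitting decomposition for an algebraic element `φ` of any algebra: a multiple `e = φ * q(φ)`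
of `φ` is idempotent, and a power of `φ` kills the complementary idempotent. -/
lemma exists_idempotent_poly {R : Type*} [Ring R] [Algebra k R] (φ : R) {p : k[X]} (hp : p ≠ 0)
    (h : aeval φ p = 0) : ∃ (q : k[X]) (n : ℕ),
      φ * aeval φ q * (φ * aeval φ q) = φ * aeval φ q ∧ φ ^ n * (1 - φ * aeval φ q) = 0 := by
  obtain ⟨r, hr, hX⟩ := exists_eq_pow_rootMultiplicity_mul_and_not_dvd p hp 0
  rw [C_0, sub_zero] at hr hX
  set n := rootMultiplicity 0 p
  obtain ⟨a, b, hab⟩ : IsCoprime (X ^ (n + 1)) r :=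
    (irreducible_X.coprime_iff_not_dvd.2 hX).pow_left
  have he : φ * aeval φ (a * X ^ n) = aeval φ (a * X ^ (n + 1)) := by
    rw [pow_succ, ← mul_assoc, mul_comm _ X, map_mul _ X, aeval_X]
  have he' : 1 - φ * aeval φ (a * X ^ n) = aeval φ (b * r) := by
    rw [he, sub_eq_iff_eq_add, ← map_add, add_comm, hab, map_one]
  have h0 : φ ^ n * (1 - φ * aeval φ (a * X ^ n)) = 0 := by
    rw [he', ← aeval_X_pow (R := k) φ, ← map_mul,
      show X ^ n * (b * r) = b * p by rw [hr]; ring, map_mul, h, mul_zero]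
  refine ⟨a * X ^ n, n, ?_, h0⟩
  have h1 : φ * aeval φ (a * X ^ n) * (1 - φ * aeval φ (a * X ^ n)) = 0 := by
    nth_rw 1 [he]
    rw [pow_succ', ← mul_assoc, map_mul, map_pow, aeval_X, mul_assoc, h0, mul_zero]
  rw [mul_sub, mul_one, sub_eq_zero] at h1
  exact h1.symm

/-! ### Sums of conjugates and Higman's criterion -/

/-- The module `G → M` of functions, with action `(g • F) x = g • F (g⁻¹ * x)`: the tensor
product of `M` with the regular representation, which is relatively free and surjects onto `M`. -/
def inducedRep (M : Rep.{0} k G) : Representation k G (G → M.V) where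
  toFun g := LinearMap.pi fun x => M.ρ g ∘ₗ LinearMap.proj (g⁻¹ * x)
  map_one' := by ext; simp
  map_mul' a b := by ext; simp [mul_assoc]

variable [Fintype G]

/-- Higman's condition on a morphism: `f` is the sum of the conjugates of some linear map `θ`. These
stably zero morphisms form an ideal, consisting of the maps that factor through a projective module. -/
def IsTrace {M N : Rep.{0} k G} (f : M ⟶ N) : Prop :=
  ∃ θ : M.V →ₗ[k] N.V, ∀ x, f.hom x = ∑ g : G, N.ρ g (θ (M.ρ g⁻¹ x))

lemma IsTrace.comp_left {f : M ⟶ N} (hf : IsTrace f) (h : L ⟶ M) : IsTrace (h ≫ f) := by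
  obtain ⟨θ, hθ⟩ := hf
  refine ⟨θ ∘ₗ h.hom.toLinearMap, fun x => ?_⟩
  simp [hθ, Rep.hom_comm_apply]

lemma IsTrace.comp_right {f : L ⟶ M} (hf : IsTrace f) (h : M ⟶ N) : IsTrace (f ≫ h) := by
  obtain ⟨θ, hθ⟩ := hf
  refine ⟨h.hom.toLinearMap ∘ₗ θ, fun x => ?_⟩
  simp [hθ, Rep.hom_comm_apply]

lemma IsTrace.add {f g : M ⟶ N} (hf : IsTrace f) (hg : IsTrace g) : IsTrace (f + g) := by
  obtain ⟨θ, hθ⟩ := hf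
  obtain ⟨η, hη⟩ := hg
  refine ⟨θ + η, fun x => ?_⟩
  simp [hθ, hη, Rep.add_hom, Finset.sum_add_distrib]

lemma IsTrace.neg {f : M ⟶ N} (hf : IsTrace f) : IsTrace (-f) := by
  obtain ⟨θ, hθ⟩ := hf
  refine ⟨-θ, fun x => ?_⟩
  simp [hθ, Rep.neg_hom]

lemma IsTrace.zero : IsTrace (0 : M ⟶ N) := ⟨0, fun x => by simp⟩

lemma IsTrace.sub {f g : M ⟶ N} (hf : IsTrace f) (hg : IsTrace g) : IsTrace (f - g) := by
  rw [sub_eq_add_neg]; exact hf.add hg.neg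

lemma IsTrace.whiskerRight {f : M ⟶ N} (hf : IsTrace f) (X : Rep.{0} k G) : IsTrace (f ▷ X) := by
  obtain ⟨θ, hθ⟩ := hf
  refine ⟨TensorProduct.map θ LinearMap.id, fun x => ?_⟩
  have key : (f ▷ X).hom.toLinearMap = ∑ g : G, (TensorProduct.map (N.ρ g) (X.ρ g)) ∘ₗ
      TensorProduct.map θ LinearMap.id ∘ₗ (TensorProduct.map (M.ρ g⁻¹) (X.ρ g⁻¹)) := by
    refine TensorProduct.ext' fun a b => ?_
    simp [hθ, TensorProduct.sum_tmul]
  refine (LinearMap.congr_fun key x).trans ?_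
  rw [LinearMap.sum_apply]
  rfl

lemma IsTrace.whiskerLeft {f : M ⟶ N} (hf : IsTrace f) (X : Rep.{0} k G) : IsTrace (X ◁ f) := by
  have : X ◁ f = (β_ X M).hom ≫ f ▷ X ≫ (β_ X N).inv := by simp
  rw [this]
  exact ((hf.whiskerRight X).comp_right _).comp_left _

lemma isTrace_of_card_ne (hG : (Fintype.card G : k) ≠ 0) (f : M ⟶ N) : IsTrace f := by
  refine ⟨(Fintype.card G : k)⁻¹ • f.hom.toLinearMap, fun x => ?_⟩
  simp [Rep.hom_comm_apply, ← Nat.cast_smul_eq_nsmul k, smul_smul, hG]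

/-- A sum of conjugates on the trivial module is a multiple of `|G|`. -/
lemma IsTrace.eq_zero_of_unit (hG : (Fintype.card G : k) = 0)
    {u : 𝟙_ (Rep.{0} k G) ⟶ 𝟙_ (Rep.{0} k G)} (hu : IsTrace u) : u = 0 := by
  obtain ⟨θ, hθ⟩ := hu
  apply Rep.hom_ext
  apply Representation.IntertwiningMap.ext
  refine LinearMap.ext fun x => (hθ x).trans ?_
  change ∑ g : G, θ x = (0 : k)
  rw [Finset.sum_const, Finset.card_univ, ← Nat.cast_smul_eq_nsmul k, hG, zero_smul]

lemma IsTrace.partialTrace {u : M ⊗ N ⟶ M ⊗ N} (hu : IsTrace u) : IsTrace (partialTrace f g u) :=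
  ((((((hu.whiskerRight M).comp_right _)).comp_left _).comp_left _).comp_left _)

/-- The sum of the conjugates of a linear map, as a morphism of representations. -/
noncomputable def conjSum (θ : M.V →ₗ[k] N.V) : M ⟶ N :=
  Rep.ofHom (ρ := M.ρ) (σ := N.ρ) ⟨∑ g : G, N.ρ g ∘ₗ θ ∘ₗ M.ρ g⁻¹, fun h => by
    refine LinearMap.ext fun x => ?_
    simp only [LinearMap.comp_apply, LinearMap.sum_apply, map_sum]
    refine Fintype.sum_equiv (Equiv.mulLeft h⁻¹) _ _ fun g => ?_
    simp [← Module.End.mul_apply, ← map_mul]⟩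

lemma conjSum_apply (θ : M.V →ₗ[k] N.V) (x : M.V) :
    (conjSum θ).hom x = ∑ g : G, N.ρ g (θ (M.ρ g⁻¹ x)) := by
  change (∑ g : G, N.ρ g ∘ₗ θ ∘ₗ M.ρ g⁻¹) x = _
  simp

/-- One half of Higman's criterion: lifts are constructed by averaging a linear lift against `θ`. -/
lemma projective_of_isTrace (h : IsTrace (𝟙 M)) : Projective M := by
  obtain ⟨θ, hθ⟩ := h
  refine ⟨fun {E X} f e _ => ?_⟩
  have hs := (Rep.epi_iff_surjective e).1 inferInstance
  obtain ⟨s, hs⟩ := LinearMap.exists_rightInverse_of_surjective e.hom.toLinearMap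
    (LinearMap.range_eq_top.2 hs)
  have hs' : ∀ x, e.hom (s x) = x := fun x => LinearMap.congr_fun hs x
  refine ⟨conjSum (s ∘ₗ f.hom.toLinearMap ∘ₗ θ), ?_⟩
  ext x
  have := congrArg f.hom (hθ x)
  simp only [map_sum, Rep.hom_comm_apply] at this
  refine Eq.trans ?_ this.symm
  change e.hom ((conjSum (s ∘ₗ f.hom.toLinearMap ∘ₗ θ)).hom x) = _
  simp [conjSum_apply, Rep.hom_comm_apply, hs']

/-- Modules satisfying Higman's criterion are injective. -/
lemma exists_retraction_of_isTrace (h : IsTrace (𝟙 M)) (i : M ⟶ N) [Mono i] :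
    ∃ p : N ⟶ M, i ≫ p = 𝟙 M := by
  obtain ⟨θ, hθ⟩ := h
  have hi := (Rep.mono_iff_injective i).1 inferInstance
  obtain ⟨r, hr⟩ := LinearMap.exists_leftInverse_of_injective i.hom.toLinearMap
    (LinearMap.ker_eq_bot.2 hi)
  have hr' : ∀ x, r (i.hom x) = x := fun x => LinearMap.congr_fun hr x
  refine ⟨conjSum (θ ∘ₗ r), ?_⟩
  ext x
  refine Eq.trans ?_ (hθ x).symm
  change (conjSum (θ ∘ₗ r)).hom (i.hom x) = _
  simp [conjSum_apply, ← Rep.hom_comm_apply, hr']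

/-- The other half of Higman's criterion: `M` is a retract of `inducedRep M`, on which the
projection to the coordinate at `1` has the identity as sum of its conjugates. -/
lemma isTrace_of_projective (h : Projective M) : IsTrace (𝟙 M) := by
  classical
  have h1 : IsTrace (𝟙 (Rep.of (inducedRep M))) := by
    refine ⟨LinearMap.single k (fun _ : G => M.V) 1 ∘ₗ LinearMap.proj 1, fun F => ?_⟩
    funext x
    change F x = (∑ g : G, (inducedRep M g (Pi.single 1 (inducedRep M g⁻¹ F 1)))) x
    rw [Finset.sum_apply, Finset.sum_eq_single x]
    · simp [inducedRep, ← Module.End.mul_apply, ← map_mul]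
    · intro g _ hg
      have : g⁻¹ * x ≠ 1 := fun h => hg (inv_mul_eq_one.1 h)
      simp [inducedRep, this]
    · simp
  let e : Rep.of (inducedRep M) ⟶ M := Rep.ofHom ⟨∑ x, LinearMap.proj x, fun g => by
    refine LinearMap.ext fun F => ?_
    simp only [LinearMap.comp_apply, LinearMap.sum_apply, map_sum]
    exact Fintype.sum_equiv (Equiv.mulLeft g⁻¹) _ _ fun x => rfl⟩
  have : Epi e := by
    rw [Rep.epi_iff_surjective]
    intro m
    refine ⟨Pi.single 1 m, ?_⟩
    change (∑ x : G, LinearMap.proj (φ := fun _ : G => M.V) x) (Pi.single 1 m) = m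
    simp
  have h2 : Projective.factorThru (𝟙 M) e ≫ 𝟙 _ ≫ e = 𝟙 M := by
    rw [Category.id_comp, Projective.factorThru_comp]
  rw [← h2]
  exact (h1.comp_right _).comp_left _

lemma projective_iff : Projective M ↔ IsTrace (𝟙 M) :=
  ⟨isTrace_of_projective, projective_of_isTrace⟩

/-! ### Summands with projective complement -/

/-- `A` is a direct summand of `M` with projective complement. The complement is only recorded
through the idempotent `𝟙 - p ≫ i`, so that no object has to be chosen for it. -/
def StableSummand (A M : Rep.{0} k G) : Prop :=
  ∃ (i : A ⟶ M) (p : M ⟶ A), i ≫ p = 𝟙 A ∧ IsTrace (𝟙 M - p ≫ i)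

lemma StableSummand.split {A M : Rep.{0} k G} (h : StableSummand A M) :
    ∃ Q : Rep.{0} k G, Projective Q ∧ Nonempty (M ≅ A ⊞ Q) := by
  obtain ⟨i, p, hip, ht⟩ := h
  have hpi : (𝟙 M - p ≫ i) ≫ p = 0 := by simp [hip]
  have hii : i ≫ (𝟙 M - p ≫ i) = 0 := by simp [reassoc_of% hip]
  obtain ⟨Q, j, q, hjq, hqj⟩ := IsIdempotentComplete.idempotents_split M (𝟙 M - p ≫ i) (by
    rw [Preadditive.comp_sub, reassoc_of% hpi]; simp)
  refine ⟨Q, projective_of_isTrace ?_, ⟨⟨biprod.lift p q, biprod.desc i j, ?_, ?_⟩⟩⟩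
  · have : j ≫ (𝟙 M - p ≫ i) ≫ q = 𝟙 Q := by
      rw [← hqj]; simp [hjq]
    rw [← this]
    exact (ht.comp_right _).comp_left _
  · simp [biprod.lift_desc, hqj]
  · have h1 : j ≫ p = 0 := by
      have : j ≫ (𝟙 M - p ≫ i) ≫ p = j ≫ p := by rw [← hqj]; simp [reassoc_of% hjq]
      rw [← this, hpi, comp_zero]
    have h2 : i ≫ q = 0 := by
      have : i ≫ (𝟙 M - p ≫ i) ≫ q = i ≫ q := by rw [← hqj]; simp [hjq]
      rw [← this, reassoc_of% hii, zero_comp]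
    apply biprod.hom_ext' <;> apply biprod.hom_ext <;> simp [hip, hjq, h1, h2]

lemma StableSummand.of_iso {A M Q : Rep.{0} k G} (hQ : IsTrace (𝟙 Q)) (e : M ≅ A ⊞ Q) :
    StableSummand A M := by
  refine ⟨biprod.inl ≫ e.inv, e.hom ≫ biprod.fst, by simp, ?_⟩
  have : 𝟙 M - (e.hom ≫ biprod.fst) ≫ biprod.inl ≫ e.inv
      = (e.hom ≫ biprod.snd) ≫ 𝟙 Q ≫ biprod.inr ≫ e.inv := by
    have h1 : e.hom ≫ (biprod.fst ≫ biprod.inl + biprod.snd ≫ biprod.inr) ≫ e.inv = 𝟙 M := by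
      rw [biprod.total]; simp
    rw [sub_eq_iff_eq_add, ← h1, Preadditive.add_comp, Preadditive.comp_add, add_comm]
    simp only [Category.assoc, Category.id_comp]
  rw [this]
  exact (hQ.comp_right _).comp_left _

lemma StableSummand.refl (M : Rep.{0} k G) : StableSummand M M :=
  ⟨𝟙 M, 𝟙 M, by simp, by simpa using IsTrace.zero⟩

lemma StableSummand.trans {A B C : Rep.{0} k G} (h : StableSummand A B) (h' : StableSummand B C) :
    StableSummand A C := by
  obtain ⟨i, p, hip, ht⟩ := h
  obtain ⟨j, q, hjq, ht'⟩ := h'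
  refine ⟨i ≫ j, q ≫ p, by simp [reassoc_of% hjq, hip], ?_⟩
  have : 𝟙 C - (q ≫ p) ≫ i ≫ j = (𝟙 C - q ≫ j) + q ≫ (𝟙 B - p ≫ i) ≫ j := by simp
  rw [this]
  exact ht'.add ((ht.comp_right _).comp_left _)

lemma StableSummand.tensor {A B M N : Rep.{0} k G} (h : StableSummand A M)
    (h' : StableSummand B N) : StableSummand (A ⊗ B) (M ⊗ N) := by
  obtain ⟨i, p, hip, ht⟩ := h
  obtain ⟨j, q, hjq, ht'⟩ := h'
  refine StableSummand.trans (B := A ⊗ N) ⟨A ◁ j, A ◁ q, ?_, ?_⟩ ⟨i ▷ N, p ▷ N, ?_, ?_⟩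
  · rw [← whiskerLeft_comp, hjq, whiskerLeft_id]
  · have : 𝟙 _ - A ◁ q ≫ A ◁ j = A ◁ (𝟙 N - q ≫ j) :=
      (by simp : _ = (tensorLeft A).map (𝟙 N) - (tensorLeft A).map (q ≫ j)).trans
        ((tensorLeft A).map_sub).symm
    rw [this]
    exact ht'.whiskerLeft A
  · rw [← comp_whiskerRight, hip, id_whiskerRight]
  · have : 𝟙 _ - p ▷ N ≫ i ▷ N = (𝟙 M - p ≫ i) ▷ N :=
      (by simp : _ = (tensorRight N).map (𝟙 M) - (tensorRight N).map (p ≫ i)).trans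
        ((tensorRight N).map_sub).symm
    rw [this]
    exact ht.whiskerRight N

/-- When `|G| = 0` in `k`, the trivial module is not projective, so it survives in a summand whose
complement is projective. -/
lemma StableSummand.unit_of_tensor (hG : (Fintype.card G : k) = 0) {X Y : Rep.{0} k G}
    (h : StableSummand (𝟙_ _) X) (h' : StableSummand Y X) : StableSummand (𝟙_ _) Y := by
  obtain ⟨f, g, hfg, ht⟩ := h
  obtain ⟨i, p, hip, ht'⟩ := h'
  refine ⟨f ≫ p, i ≫ g, ?_, ?_⟩
  · have h1 : f ≫ (𝟙 X - p ≫ i) ≫ g = 0 :=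
      IsTrace.eq_zero_of_unit hG ((ht'.comp_right _).comp_left _)
    simp only [Preadditive.sub_comp, Preadditive.comp_sub, Category.id_comp, hfg, sub_eq_zero,
      Category.assoc] at h1
    simp [← h1]
  · have : 𝟙 Y - (i ≫ g) ≫ f ≫ p = i ≫ (𝟙 X - g ≫ f) ≫ p := by simp [hip]
    rw [this]
    exact (ht.comp_right _).comp_left _

lemma StableSummand.not_isZero (h : StableSummand (𝟙_ _) (M ⊗ N)) : ¬ IsZero M := fun h0 => by
  obtain ⟨f, g, hfg, -⟩ := h
  apply id_unit_ne_zero (k := k) (G := G)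
  have h1 : 𝟙 (M ⊗ N) = 0 := by
    rw [← id_whiskerRight, h0.eq_of_src (𝟙 M) 0, MonoidalPreadditive.zero_whiskerRight]
  rw [← hfg, ← Category.id_comp g, h1, zero_comp, comp_zero]

lemma StableSummand.of_mono (hG : (Fintype.card G : k) ≠ 0) {A M : Rep.{0} k G}
    (i : A ⟶ M) [Mono i] : StableSummand A M := by
  obtain ⟨p, hp⟩ := exists_retraction_of_isTrace (isTrace_of_card_ne hG (𝟙 A)) i
  exact ⟨i, p, hp, isTrace_of_card_ne hG _⟩

lemma StableSummand.of_epi (hG : (Fintype.card G : k) ≠ 0) {A M : Rep.{0} k G}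
    (e : M ⟶ A) [Epi e] : StableSummand A M := by
  have : Projective A := projective_of_isTrace (isTrace_of_card_ne hG _)
  exact ⟨Projective.factorThru (𝟙 A) e, e, by simp, isTrace_of_card_ne hG _⟩

/-! ### Stable indecomposability -/

/-- The scalar `f ≫ (e ⊗ 1) ≫ g` detects stable vanishing: if it is zero, then `e ⊗ 1` is stably
equal to `g ≫ (f ≫ (e ⊗ 1) ≫ g) ≫ f = 0`, and its partial trace `e` is stably zero. -/
lemma isTrace_of_char_eq_zero (hfg : f ≫ g = 𝟙 _) (ht : IsTrace (𝟙 (M ⊗ N) - g ≫ f)) {e : M ⟶ M}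
    (he : f ≫ e ▷ N ≫ g = 0) : IsTrace e := by
  rw [← partialTrace_whiskerRight hfg e]
  apply IsTrace.partialTrace
  have : e ▷ N = (𝟙 _ - g ≫ f) ≫ e ▷ N + (g ≫ f ≫ e ▷ N) ≫ (𝟙 _ - g ≫ f) := by
    simp [reassoc_of% he]
  rw [this]
  exact (ht.comp_right _).add (ht.comp_left _)

/-- Stable indecomposability of `M`. When `|G| = 0` in `k`, the map `χ e = f ≫ (e ⊗ 1) ≫ g` is
multiplicative with values in the domain `End 𝟙_`, so it vanishes on one of two orthogonal
idempotents. -/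
lemma isTrace_or_isTrace (hG : (Fintype.card G : k) = 0)
    (hfg : f ≫ g = 𝟙 _) (ht : IsTrace (𝟙 (M ⊗ N) - g ≫ f)) {A B C : Rep.{0} k G}
    (hA : StableSummand A M) (e : A ≅ B ⊞ C) : IsTrace (𝟙 B) ∨ IsTrace (𝟙 C) := by
  obtain ⟨i, p, hip, -⟩ := hA
  set eB : M ⟶ M := p ≫ e.hom ≫ biprod.fst ≫ biprod.inl ≫ e.inv ≫ i with hB
  set eC : M ⟶ M := p ≫ e.hom ≫ biprod.snd ≫ biprod.inr ≫ e.inv ≫ i with hC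
  have hBC : eB ≫ eC = 0 := by simp [hB, hC, reassoc_of% hip]
  have hmul : (f ≫ eB ▷ N ≫ g) ≫ (f ≫ eC ▷ N ≫ g) = 0 := by
    have h1 : f ≫ eB ▷ N ≫ (𝟙 _ - g ≫ f) ≫ eC ▷ N ≫ g = 0 :=
      IsTrace.eq_zero_of_unit hG (((ht.comp_right _).comp_left _).comp_left _)
    have h2 : eB ▷ N ≫ eC ▷ N ≫ g = 0 := by
      rw [← comp_whiskerRight_assoc, hBC]; simp
    simpa [h2] using h1
  rcases unit_comp_eq_zero hmul with h | h
  · left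
    have h1 := isTrace_of_char_eq_zero hfg ht h
    have : 𝟙 B = (biprod.inl ≫ e.inv ≫ i) ≫ eB ≫ (p ≫ e.hom ≫ biprod.fst) := by
      simp [hB, reassoc_of% hip]
    rw [this]
    exact (h1.comp_right _).comp_left _
  · right
    have h1 := isTrace_of_char_eq_zero hfg ht h
    have : 𝟙 C = (biprod.inr ≫ e.inv ≫ i) ≫ eC ≫ (p ≫ e.hom ≫ biprod.snd) := by
      simp [hC, reassoc_of% hip]
    rw [this]
    exact (h1.comp_right _).comp_left _

/-! ### Finite-dimensional summands -/

/-- A module whose identity is stably equal to a finite-rank endomorphism `φ` is finite-dimensional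
up to a projective summand, by the Fitting decomposition of `φ`: modulo stably zero morphisms `φ`
is `1`, so the summand on which `φ` is nilpotent is projective. -/
lemma exists_finite_stableSummand (φ : End M)
    (hφ : Module.Finite k (LinearMap.range (Rep.Hom.hom (φ : M ⟶ M)).toLinearMap))
    (ht : IsTrace (M := M) (N := M) (1 - φ : End M)) :
    ∃ A : Rep.{0} k G, Module.Finite k A.V ∧ StableSummand A M := by
  obtain ⟨P, hP, hP0⟩ := exists_aeval_eq_zero φ hφ
  obtain ⟨q, n, hee, hn⟩ := exists_idempotent_poly (R := End M) φ hP hP0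
  set s : End M := Polynomial.aeval (R := k) (A := End M) φ q with hs
  -- Multiplication in `End M` is composition in the reverse order: `φ * s` is `s ≫ φ`.
  have hee' : (s ≫ φ) ≫ (s ≫ φ) = s ≫ φ := hee
  have hpow : ∀ m : ℕ, IsTrace (M := M) (N := M) (1 - φ ^ m : End M) := by
    intro m
    induction m with
    | zero => rw [pow_zero, sub_self]; exact IsTrace.zero
    | succ m ih =>
      rw [show 1 - φ ^ (m + 1) = (1 - φ) + (1 - φ ^ m) * φ by rw [pow_succ]; noncomm_ring]
      exact ht.add (ih.comp_left φ)
  have h1 : IsTrace (𝟙 M - s ≫ φ) := by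
    have h2 : (1 - φ * s : End M) = (1 - φ ^ n) * (1 - φ * s) := by
      rw [sub_mul, hn, one_mul, sub_zero]
    have h3 : IsTrace (M := M) (N := M) ((1 - φ ^ n) * (1 - φ * s) : End M) :=
      (hpow n).comp_left (1 - φ * s : End M)
    rw [← h2] at h3
    exact h3
  obtain ⟨A, i, p, hip, hpi⟩ := IsIdempotentComplete.idempotents_split M (s ≫ φ) hee'
  refine ⟨A, ?_, i, p, hip, hpi ▸ h1⟩
  have hi : i = (i ≫ s) ≫ φ := by
    rw [Category.assoc, ← hpi, reassoc_of% hip]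
  refine Module.Finite.of_injective (LinearMap.codRestrict
    (LinearMap.range (Rep.Hom.hom (φ : M ⟶ M)).toLinearMap) i.hom.toLinearMap fun x => ?_) ?_
  · rw [hi]; exact ⟨(i ≫ s).hom x, rfl⟩
  · intro x y hxy
    have h2 : i.hom x = i.hom y := congrArg Subtype.val hxy
    have h3 : ∀ z, p.hom (i.hom z) = z := fun z => by
      have := congrArg (fun u : A ⟶ A => u.hom z) hip
      exact this
    rw [← h3 x, h2, h3]

/-- The identity of `M` is the partial trace of `𝟙 (M ⊗ N)`, hence stably equal to that of
`g ≫ f`, which has finite rank. -/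
lemma StableSummand.exists_finite (h : StableSummand (𝟙_ _) (M ⊗ N)) :
    ∃ A : Rep.{0} k G, Module.Finite k A.V ∧ StableSummand A M := by
  obtain ⟨f, g, hfg, ht⟩ := h
  refine exists_finite_stableSummand (partialTrace f g (g ≫ f)) (finite_range_partialTrace f g) ?_
  change IsTrace (𝟙 M - partialTrace f g (g ≫ f))
  have h1 : 𝟙 M - partialTrace f g (g ≫ f) = partialTrace f g (𝟙 _ - g ≫ f) := by
    have h2 : 𝟙 M = partialTrace f g (𝟙 (M ⊗ N)) := by
      rw [← id_whiskerRight, partialTrace_whiskerRight hfg]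
    rw [h2, sub_eq_iff_eq_add]
    simp only [partialTrace]
    rw [← Preadditive.comp_add, ← Preadditive.comp_add, ← Preadditive.comp_add,
      ← Preadditive.add_comp, ← MonoidalPreadditive.add_whiskerRight, sub_add_cancel]
  rw [h1]
  exact ht.partialTrace

/-- The semisimple case: the span of the orbit of a nonzero vector is a summand. -/
lemma exists_finite_stableSummand_of_card_ne (hG : (Fintype.card G : k) ≠ 0) (hM : ¬ IsZero M) :
    ∃ A : Rep.{0} k G, Module.Finite k A.V ∧ ¬ IsZero A ∧ StableSummand A M := by
  obtain ⟨v, hv⟩ : ∃ v : M.V, v ≠ 0 := by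
    by_contra! h
    exact hM ((Rep.isZero_iff k G M).2 ⟨fun a b => by rw [h a, h b]⟩)
  let W : Submodule k M.V := Submodule.span k (Set.range fun g : G => M.ρ g v)
  have hW : ∀ g, W ≤ W.comap (M.ρ g) := by
    intro g
    refine Submodule.span_le.2 ?_
    rintro _ ⟨h, rfl⟩
    refine Submodule.subset_span ⟨g * h, ?_⟩
    simp
  have hvW : v ∈ W := Submodule.subset_span ⟨1, by simp⟩
  have : Mono (M.subtype W hW) := (Rep.mono_iff_injective _).2 Subtype.val_injective
  refine ⟨M.subrepresentation W hW, ?_, ?_, StableSummand.of_mono hG (M.subtype W hW)⟩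
  · exact FiniteDimensional.span_of_finite k (Set.finite_range _)
  · intro h
    have := (Rep.isZero_iff k G _).1 h
    exact hv (congrArg Subtype.val (Subsingleton.elim (⟨v, hvW⟩ : W) 0))

/-- The semisimple case: evaluation `M ⊗ M* ⟶ 𝟙_` splits. -/
lemma exists_dual (hG : (Fintype.card G : k) ≠ 0) (hM : ¬ IsZero M) [Module.Finite k M.V] :
    ∃ N : Rep.{0} k G, Module.Finite k N.V ∧ StableSummand (𝟙_ _) (M ⊗ N) := by
  obtain ⟨v, hv⟩ : ∃ v : M.V, v ≠ 0 := by
    by_contra! h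
    exact hM ((Rep.isZero_iff k G M).2 ⟨fun a b => by rw [h a, h b]⟩)
  obtain ⟨l, hl⟩ := Module.Projective.exists_dual_eq_one k hv
  let ev : M ⊗ (ihom M).obj (𝟙_ (Rep.{0} k G)) ⟶ 𝟙_ (Rep.{0} k G) := (ihom.ev M).app (𝟙_ _)
  have : Epi ev := by
    rw [Rep.epi_iff_surjective]
    intro c
    refine ⟨((c : k) • v) ⊗ₜ[k] l, ?_⟩
    change l ((c : k) • v) = (c : k)
    rw [map_smul, hl, smul_eq_mul, mul_one]
  refine ⟨(ihom M).obj (𝟙_ (Rep.{0} k G)), ?_, StableSummand.of_epi hG ev⟩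
  change Module.Finite k (M.V →ₗ[k] k)
  infer_instance

lemma StableSummand.exists_finite_ne_zero (h : StableSummand (𝟙_ _) (M ⊗ N)) :
    ∃ A : Rep.{0} k G, Module.Finite k A.V ∧ ¬ IsZero A ∧ StableSummand A M := by
  by_cases hG : (Fintype.card G : k) = 0
  · obtain ⟨A, hA, hAM⟩ := h.exists_finite
    refine ⟨A, hA, fun h0 => ?_, hAM⟩
    exact StableSummand.not_isZero (h.unit_of_tensor hG (hAM.tensor (StableSummand.refl N))) h0
  · exact exists_finite_stableSummand_of_card_ne hG h.not_isZero

end StableRep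

open StableRep in
/-- Let `G` be a finite group and `k` a field of characteristic `p > 0`.
If `M` and `N` are possibly infinite-dimensional `kG`-modules with `M ⊗ N ≅ k ⊕ P` for some
projective `P`, then `M ≅ M̄ ⊕ Q` with `Q` projective and `M̄` finite-dimensional,
indecomposable and endotrivial. -/
theorem infinite_dimensional_endotrivial_decomposition (k G : Type) [Field k] (p : ℕ)
    (hp : 0 < p) [CharP k p] [Group G] [Finite G] (M N P : Rep k G)
    (hP : Projective P) (h : Nonempty (M ⊗ N ≅ Rep.trivial k G k ⊞ P)) :
    ∃ Mbar Q : Rep k G, Projective Q ∧ Nonempty (M ≅ Mbar ⊞ Q) ∧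
      FiniteDimensional k Mbar.V ∧
      (¬ IsZero Mbar ∧
        ∀ A B : Rep k G, Nonempty (Mbar ≅ A ⊞ B) → IsZero A ∨ IsZero B) ∧
      ∃ Nbar P' : Rep k G, FiniteDimensional k Nbar.V ∧ Projective P' ∧
        Nonempty (Mbar ⊗ Nbar ≅ Rep.trivial k G k ⊞ P') := by
  classical
  have := Fintype.ofFinite G
  have hMN : StableSummand (𝟙_ _) (M ⊗ N) := StableSummand.of_iso (isTrace_of_projective hP) h.some
  -- `M̄` is chosen of least dimension among the nonzero finite-dimensional stable summands of `M`:
  -- splitting off a projective module from it would give a smaller one.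
  have hex : ∃ n : ℕ, ∃ A : Rep k G, Module.Finite k A.V ∧ ¬ IsZero A ∧ StableSummand A M ∧
      Module.finrank k A.V = n := by
    obtain ⟨A, h1, h2, h3⟩ := hMN.exists_finite_ne_zero
    exact ⟨_, A, h1, h2, h3, rfl⟩
  obtain ⟨A, hAfin, hA0, hAM, hAn⟩ := Nat.find_spec hex
  have hmin : ∀ B C : Rep k G, (A ≅ B ⊞ C) → ¬ IsZero B → ¬ IsZero C → ¬ IsTrace (𝟙 C) := by
    intro B C e hB hC hCt
    obtain ⟨hBfin, hlt⟩ := finrank_lt_of_iso e hC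
    exact Nat.find_min hex (hAn ▸ hlt) ⟨B, hBfin, hB, (StableSummand.of_iso hCt e).trans hAM, rfl⟩
  obtain ⟨Q, hQ, hMQ⟩ := hAM.split
  refine ⟨A, Q, hQ, hMQ, hAfin, ⟨hA0, ?_⟩, ?_⟩
  · rintro B C ⟨e⟩
    by_contra! hBC
    have htr : IsTrace (𝟙 B) ∨ IsTrace (𝟙 C) := by
      by_cases hG : (Fintype.card G : k) = 0
      · obtain ⟨f, g, hfg, ht⟩ := hMN
        exact isTrace_or_isTrace hG hfg ht hAM e
      · exact Or.inl (isTrace_of_card_ne hG _)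
    rcases htr with ht | ht
    · exact hmin C B (e ≪≫ biprod.braiding B C) hBC.2 hBC.1 ht
    · exact hmin B C e hBC.1 hBC.2 ht
  · obtain ⟨B, hB, hAB⟩ : ∃ B : Rep k G, Module.Finite k B.V ∧ StableSummand (𝟙_ _) (A ⊗ B) := by
      by_cases hG : (Fintype.card G : k) = 0
      · have hNM : StableSummand (𝟙_ _) (N ⊗ M) :=
          StableSummand.of_iso (isTrace_of_projective hP) (β_ N M ≪≫ h.some)
        obtain ⟨B, hB, hBN⟩ := hNM.exists_finite
        exact ⟨B, hB, hMN.unit_of_tensor hG (hAM.tensor hBN)⟩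
      · exact exists_dual hG hA0
    obtain ⟨P', hP', hABP⟩ := hAB.split
    exact ⟨B, P', hB, hP', hABP⟩
end

section
/- Let G be a finite group and k a field of characteristic p > 0. If M and N are possibly infinite-dimensional kG-modules such that M ⊗ N ≅ k ⊕ P for some projective kG-module P, then there exists a finite-dimensional kG-submodule M' of M such that the trivial module k is a direct summand of M' ⊗ N and M is a direct summand of M' ⊕ R for some projective kG-module R. -/
/-!
Write `𝟙` for the trivial module and let `s : 𝟙 ⟶ M ⊗ N`, `r : M ⊗ N ⟶ 𝟙` be the inclusion and
projection given by `M ⊗ N ≅ 𝟙 ⊞ P`. The element `s 1` is a finite sum of pure tensors and `G` is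
finite, so `s 1` lies in `M' ⊗ N` for some finite-dimensional submodule `ι : M' ⟶ M`. Since
`ι ⊗ N` is injective, `s` factors as `t ≫ (ι ⊗ N)` with `t : 𝟙 ⟶ M' ⊗ N`
(`exists_finiteDimensional_factor`). This has two consequences.

* `(ι ⊗ N) ≫ r` is a retraction of `t`, so `𝟙` is a direct summand of `M' ⊗ N`.
* The identity of `M ≅ 𝟙 ⊗ M` factors through `t ⊗ M : 𝟙 ⊗ M ⟶ (M' ⊗ N) ⊗ M`, so `M` is a direct
  summand of `(M' ⊗ N) ⊗ M ≅ M' ⊗ (M ⊗ N) ≅ M' ⊞ (M' ⊗ P)`.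

Finally `M' ⊗ P` is projective, because `M' ⊗ -` is left adjoint to `Homₖ(M', -)`, and the latter
preserves surjections over a field (`projective_tensor`).
-/

open CategoryTheory CategoryTheory.Limits MonoidalCategory

section Categorical

variable {C : Type*} [Category C] [Abelian C]

/-- A retract in an abelian category is a direct summand. -/
theorem exists_iso_biprod_of_retract {X Y : C} (s : X ⟶ Y) (r : Y ⟶ X) (h : s ≫ r = 𝟙 X) :
    ∃ Z : C, Nonempty (Y ≅ X ⊞ Z) := by
  have : IsSplitMono s := ⟨⟨⟨r, h⟩⟩⟩
  exact ⟨_, ⟨biprod.uniqueUpToIso _ _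
    (isBilimitBinaryBiconeOfIsSplitMonoOfCokernel (cokernelIsCokernel s))⟩⟩

variable [MonoidalCategory C] [MonoidalPreadditive C] [BraidedCategory C]

/-- If the inclusion of the summand `𝟙_ C` of `M ⊗ N ≅ 𝟙_ C ⊞ P` factors through `ι ▷ N`, then `M`
is a direct summand of `M' ⊞ (M' ⊗ P)`. -/
theorem exists_biprod_iso_of_factor {M N P M' : C} (e : M ⊗ N ≅ 𝟙_ C ⊞ P) (ι : M' ⟶ M)
    (t : 𝟙_ C ⟶ M' ⊗ N) (h : t ≫ ι ▷ N = biprod.inl ≫ e.inv) :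
    ∃ Y : C, Nonempty (M' ⊞ (M' ⊗ P) ≅ M ⊞ Y) := by
  obtain ⟨Y, ⟨i⟩⟩ := exists_iso_biprod_of_retract
    ((λ_ M).inv ≫ t ▷ M) ((ι ▷ N) ▷ M ≫ (e.hom ≫ biprod.fst) ▷ M ≫ (λ_ M).hom) (by
      have : t ≫ ι ▷ N ≫ e.hom ≫ biprod.fst = 𝟙 _ := by
        rw [← Category.assoc, h]; simp
      simp only [Category.assoc, ← comp_whiskerRight_assoc, this]
      simp)
  have := preservesBinaryBiproducts_of_preservesBiproducts (tensorLeft M')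
  let j : (M' ⊗ N) ⊗ M ≅ M' ⊞ (M' ⊗ P) :=
    α_ M' N M ≪≫ whiskerLeftIso M' (β_ N M ≪≫ e) ≪≫ (tensorLeft M').mapBiprod (𝟙_ C) P ≪≫
      biprod.mapIso (ρ_ M') (Iso.refl _)
  exact ⟨Y, ⟨j.symm ≪≫ i⟩⟩

end Categorical

section Rep

variable {k G : Type} [Field k] [Group G]

theorem projective_tensor (A P : Rep k G) (hP : Projective P) : Projective (A ⊗ P) := by
  have : (ihom A).PreservesEpimorphisms := ⟨fun {X Y} f hf ↦ by
    rw [Rep.epi_iff_surjective] at hf ⊢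
    obtain ⟨g, hg⟩ := f.hom.toLinearMap.exists_rightInverse_of_surjective
      (LinearMap.range_eq_top.2 hf)
    intro (φ : A.V →ₗ[k] Y.V)
    refine ⟨(g ∘ₗ φ : A.V →ₗ[k] X.V), ?_⟩
    change f.hom.toLinearMap ∘ₗ (g ∘ₗ φ) = φ
    rw [← LinearMap.comp_assoc, hg, LinearMap.id_comp]⟩
  exact (ihom.adjunction A).map_projective P hP

/-- A finite-dimensional subspace lies in a finite-dimensional subrepresentation, namely the sum of
its translates under the finite group `G`. -/
theorem exists_invariant_ge [Finite G] (M : Rep k G) (W : Submodule k M.V)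
    [FiniteDimensional k W] :
    ∃ V : Submodule k M.V, W ≤ V ∧ FiniteDimensional k V ∧ ∀ g, V ≤ V.comap (M.ρ g) := by
  refine ⟨⨆ g : G, W.map (M.ρ g), ?_, inferInstance, fun g ↦ ?_⟩
  · simpa [Module.End.one_eq_id] using le_iSup (fun g : G ↦ W.map (M.ρ g)) 1
  · refine iSup_le fun x ↦ Submodule.map_le_iff_le_comap.1 ?_
    rw [← Submodule.map_comp, ← Module.End.mul_eq_comp, ← map_mul]
    exact le_iSup (fun g : G ↦ W.map (M.ρ g)) (g * x)

theorem exists_finiteDimensional_factor [Finite G] {M N : Rep k G} (s : 𝟙_ (Rep k G) ⟶ M ⊗ N) :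
    ∃ (M' : Rep k G) (ι : M' ⟶ M) (t : 𝟙_ (Rep k G) ⟶ M' ⊗ N), Function.Injective ι.hom ∧
      FiniteDimensional k M'.V ∧ t ≫ ι ▷ N = s := by
  obtain ⟨W, hW, hsW⟩ := TensorProduct.exists_finite_submodule_left_of_setFinite
    {(s.hom (1 : k) : TensorProduct k M.V N.V)} (Set.finite_singleton _)
  obtain ⟨V, hWV, hV, hinv⟩ := exists_invariant_ge M W
  obtain ⟨w, hw⟩ := hsW rfl
  let ι := Rep.subtype M V hinv
  have hι : Function.Injective (ι ▷ N).hom :=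
    Module.Flat.rTensor_preserves_injective_linearMap (M := N.V) V.subtype
      V.injective_subtype
  let t₀ : TensorProduct k V N.V := (Submodule.inclusion hWV).rTensor N.V w
  have ht₀ : (ι ▷ N).hom t₀ = s.hom (1 : k) := by
    rw [← hw]
    change V.subtype.rTensor N.V ((Submodule.inclusion hWV).rTensor N.V w) = _
    rw [← LinearMap.rTensor_comp_apply]
    rfl
  have hfix (g : G) : (Rep.subrepresentation M V hinv ⊗ N).ρ g t₀ = t₀ := by
    apply hι
    rw [Rep.hom_comm_apply, ht₀, ← Rep.hom_comm_apply]
    rfl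
  let t : 𝟙_ (Rep k G) ⟶ Rep.subrepresentation M V hinv ⊗ N :=
    Rep.ofHom ⟨LinearMap.toSpanSingleton k _ t₀, fun g ↦ by
      ext
      simpa using (hfix g).symm⟩
  refine ⟨_, ι, t, V.injective_subtype, hV, ?_⟩
  ext : 2
  refine LinearMap.ext_ring ?_
  change (ι ▷ N).hom ((1 : k) • t₀) = _
  rw [one_smul, ht₀]
  rfl

end Rep

/-- Let `G` be a finite group and `k` a field of characteristic `p > 0`.
If `M` and `N` are possibly infinite-dimensional `kG`-modules with `M ⊗ N ≅ k ⊕ P` for some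
projective `P`, then there is a finite-dimensional submodule `M' ⊆ M` (encoded as a
monomorphism `ι : M' ⟶ M` with injective underlying map) such that the trivial module `k`
is a direct summand of `M' ⊗ N` and `M` is a direct summand of `M' ⊕ R` for some
projective module `R`. -/
theorem finite_dimensional_submodule_summand (k G : Type) [Field k] (p : ℕ)
    (hp : 0 < p) [CharP k p] [Group G] [Finite G] (M N P : Rep k G)
    (hP : Projective P) (h : Nonempty (M ⊗ N ≅ Rep.trivial k G k ⊞ P)) :
    ∃ (M' : Rep k G) (ι : M' ⟶ M), Function.Injective ι.hom ∧
      FiniteDimensional k M'.V ∧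
      (∃ X : Rep k G, Nonempty (M' ⊗ N ≅ Rep.trivial k G k ⊞ X)) ∧
      ∃ R Y : Rep k G, Projective R ∧ Nonempty (M' ⊞ R ≅ M ⊞ Y) := by
  obtain ⟨e⟩ := h
  obtain ⟨M', ι, t, hι, hfin, ht⟩ := exists_finiteDimensional_factor
    (biprod.inl ≫ e.inv : 𝟙_ (Rep k G) ⟶ M ⊗ N)
  refine ⟨M', ι, hι, hfin,
    exists_iso_biprod_of_retract (X := 𝟙_ (Rep k G)) t (ι ▷ N ≫ e.hom ≫ biprod.fst) ?_, M' ⊗ P, ?_⟩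
  · rw [← Category.assoc, ht]
    simp only [Category.assoc, Iso.inv_hom_id_assoc]
    exact biprod.inl_fst
  · obtain ⟨Y, hY⟩ := exists_biprod_iso_of_factor (P := P) e ι t ht
    exact ⟨Y, projective_tensor M' P hP, hY⟩
end
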